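/- Let p ∈ {7, 13} and set (l, k) = ((p−1)/2, (p−1)/3). For n ≥ 1 set i(n) = v_{(2p+1)/3}((p−1)(4n−1)/6), where v_m(n) denotes the largest exponent j such that m^j divides n. Let α be the unique root of −x⁴/12 − Tx³ + x² + 1 = 0 in F(p) with |α| > 1, with continued fraction expansion α = [a₁, a₂, …]. Set v = 1 if p = 7 and v = √5 ∈ F₁₆₉ if p = 13. Then there exists a sequence (λ_n)_{n≥1} in F_p* such that a_n = λ_n v^{(−1)^n} A_{i(n),k}(T/v) for all n ≥ 1, where (λ_n) is defined from the (l+2)-tuple (ε₁, ε₂, λ₁, …, λ_l) by the recursions of Theorem 1 (λ_{f(n)} = ε₁^{(−1)^n} λ_n, λ_{f(n)+i} = −v_{i,k} ε₁^{(−1)^{n+i}} (2kθ_k δ_n)^{(−1)^i} for 1 ≤ i ≤ 2k with f(n) = (2k+1)n + l − 2k, δ_{f(n)} = ε₁^{(−1)^n} δ_n θ_k, δ_{f(n)+i} = ε₁^{(−1)^{n+i}} (i v_{i,k}/(2k−2i+1)) (2kθ_k δ_n)^{(−1)^i}, δ_n = [θ_k^{i(n)} λ_n, …, θ_k^{i(1)}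 λ₁, 2kθ_k/ε₂] for n ≤ l), with (ε₁, ε₂, λ₁, …, λ_l) = (3, 5, 2, 6, 6) for p = 7 and (12, 9, 5, 12, 9, 11, 1, 5) for p = 13. -/

import Mathlib

/-!
The root `α` is hyperquadratic. For `p = 7` and `p = 13` the quartic equation implies a relation
`α ^ p = E P β + c Q`, where `P = P_k(T/v)`, `Q = Q_k(T/v)`, `E` and `c` are constants, and
`α = [a₁, …, a_l, β]` with the `a_i = λ_i v^{(-1)^i} T/v` of the theorem. This is a polynomial
identity over the prime field, written out in `start_seven` and `start_thirteen`.

Such a relation propagates (`propagate`). Suppose `β_n ^ p = E_n P β_{f(n)} + c_n Q` and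
`a_n = μ_n A_{i(n),k}(T/v)`. Since `A_{i,k} ≡ θ^i T` modulo `T² - 1`, the Frobenius map gives
`A_{i,k} ^ p = P_k A_{i+1,k} - 2kθ · θ^i Q_k` (`Aseq_pow`). Subtracting this from the relation and
inverting, the tail `β_{f(n)} - a_{f(n)}` becomes a quotient which is expanded by
`P Y / (Q Y + 1) = [v_{1,k} T/v, …, v_{2k,k} T/v, (Y + (2kθ)² Q) / P]`
(`core_seven`, `core_thirteen`). Hence `a_{f(n)}` is a multiple of `A_{i(n)+1,k}(T/v)`, the next
`2k` partial quotients are multiples of `T/v`, and `β_{n+1} ^ p = E_{n+1} P β_{f(n+1)} + c_{n+1} Q`,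
because `f(n+1) = f(n) + 2k + 1`. All tails have absolute value greater than one, so uniqueness of
the continued fraction identifies these entries with the actual partial quotients.

The constants obey `δ_n = θ^{i(n)} λ_n + 1/δ_{n-1}`, where `c_n` is governed by `δ_{n-1}`;
`delta_step` shows that the recursive definition of `δ_n` is compatible with this and that no
`λ_n` or `δ_n` vanishes. The exponents satisfy `i(f(n)) = i(n) + 1` and `i(m) = 0` at all indices
`m` not of the form `f(n)`, because `(p-1)(4 f(n) - 1)/6 = (2k+1) (p-1)(4n - 1)/6`
(`idx_seven`, `idx_thirteen`).
-/

noncomputable section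
open Polynomial

def Tval (F : Type) [Field F] : LaurentSeries F :=
  (HahnSeries.single (1 : ℤ) (1 : F) : LaurentSeries F)⁻¹

def adeg {F : Type} [Field F] (α : LaurentSeries F) : ℤ := -α.order

def pEval {F : Type} [Field F] (f : Polynomial F) : LaurentSeries F :=
  f.eval₂ HahnSeries.C (Tval F)

def pEvalHom (F : Type) [Field F] : Polynomial F →+* LaurentSeries F :=
  Polynomial.eval₂RingHom HahnSeries.C (Tval F)

/-- substitution `T ↦ v T` on Laurent series in `1/T`
(the underlying Hahn-series variable is `1/T`). -/
def scaleT {F : Type} [Field F] (v : F) (α : LaurentSeries F) : LaurentSeries F where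
  coeff n := v ^ (-n) * α.coeff n
  isPWO_support' := α.isPWO_support'.mono (fun n hn => by
    simp only [Function.mem_support, ne_eq] at hn ⊢
    intro h; exact hn (by rw [h, mul_zero]))

/-- coefficient-wise map of Laurent series along a ring homomorphism. -/
def lsMap {F L : Type} [Field F] [Field L] (f : F →+* L) (α : LaurentSeries F) :
    LaurentSeries L where
  coeff n := f (α.coeff n)
  isPWO_support' := α.isPWO_support'.mono (fun n hn => by
    simp only [Function.mem_support, ne_eq] at hn ⊢
    intro h; exact hn (by rw [h, map_zero]))

/-- integral (polynomial) part of a Laurent series in `1/T`. -/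
def intPart {F : Type} [Field F] (α : LaurentSeries F) : Polynomial F :=
  ∑ j ∈ Finset.range ((-α.order).toNat + 1),
    Polynomial.C (α.coeff (-(j : ℤ))) * Polynomial.X ^ j

def IsCFOf {F : Type} [Field F] (α : LaurentSeries F) (a : ℕ → Polynomial F)
    (β : ℕ → LaurentSeries F) : Prop :=
  β 1 = α ∧ ∀ n, 1 ≤ n →
    0 < (a n).degree ∧ 0 < adeg (β n) ∧ β n = pEval (a n) + (β (n + 1))⁻¹

def fcf {F : Type} [DivisionRing F] : List F → F
  | [] => 0
  | [c] => c
  | c :: d :: t => c + (fcf (d :: t))⁻¹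

def fcfWD {F : Type} [DivisionRing F] : List F → Prop
  | [] => True
  | [_] => True
  | _ :: d :: t => fcf (d :: t) ≠ 0 ∧ fcfWD (d :: t)

def polyInt {F : Type} [Field F] (f : Polynomial F) : Polynomial F :=
  ∑ i ∈ Finset.range (f.natDegree + 1),
    Polynomial.C (f.coeff i * ((i : F) + 1)⁻¹) * Polynomial.X ^ (i + 1)

def Pka {F : Type} [Field F] (k : ℕ) (a : F) : Polynomial F :=
  (Polynomial.X ^ 2 + Polynomial.C a) ^ k

def Qka {F : Type} [Field F] (k : ℕ) (a : F) : Polynomial F := polyInt (Pka (k - 1) a)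

def Pk {F : Type} [Field F] (k : ℕ) : Polynomial F := (Polynomial.X ^ 2 - 1) ^ k

def Qk {F : Type} [Field F] (k : ℕ) : Polynomial F := polyInt (Pk (k - 1))

def Aseq (F : Type) [Field F] (p k : ℕ) : ℕ → Polynomial F
  | 0 => Polynomial.X
  | i + 1 => Aseq F p k i ^ p / Pk k

def vseq (F : Type) [Field F] (k : ℕ) : ℕ → F
  | 0 => 1
  | 1 => 2 * k - 1
  | i + 1 =>
      (((2 * (k : ℤ) - 2 * i - 1) * (2 * (k : ℤ) - 2 * i + 1) : ℤ) : F) *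
        (((i : F) * (2 * k - i))⁻¹) * (vseq F k i)⁻¹

def theta (F : Type) [Field F] (k : ℕ) : F :=
  (-1) ^ k * ∏ j ∈ Finset.Icc 1 k, (1 - (2 * (j : F))⁻¹)

def continuant {R : Type} [CommRing R] (a : ℕ → R) (c0 c1 : R) : ℕ → R
  | 0 => c0
  | 1 => c1
  | n + 2 => a (n + 2) * continuant a c0 c1 (n + 1) + continuant a c0 c1 n

def largestPow (m N : ℕ) : ℕ := sSup {j : ℕ | m ^ j ∣ N}

def nu0 {F : Type} [Field F] (a : ℕ → Polynomial F) : ℝ :=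
  Filter.limsup
    (fun n => ((a (n + 1)).natDegree : ℝ) / ∑ j ∈ Finset.Icc 1 n, ((a j).natDegree : ℝ))
    Filter.atTop

/-! ### The valuation at infinity -/

/-- `VG n x` says that `x` has valuation at least `n`, i.e. `|x| ≤ |T|^(-n)`. -/
def VG {K : Type} [Field K] (n : ℤ) (x : LaurentSeries K) : Prop :=
  (n : WithTop ℤ) ≤ x.orderTop

section Valuation

variable {K : Type} [Field K]

lemma VG.mono {m n : ℤ} {x : LaurentSeries K} (h : VG n x) (hmn : m ≤ n) : VG m x :=
  le_trans (WithTop.coe_le_coe.2 hmn) h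

lemma VG.add {n : ℤ} {x y : LaurentSeries K} (hx : VG n x) (hy : VG n y) : VG n (x + y) :=
  le_trans (le_min hx hy) HahnSeries.min_orderTop_le_orderTop_add

lemma VG.neg {n : ℤ} {x : LaurentSeries K} (hx : VG n x) : VG n (-x) := by
  unfold VG; rw [HahnSeries.orderTop_neg]; exact hx

lemma VG.sub {n : ℤ} {x y : LaurentSeries K} (hx : VG n x) (hy : VG n y) : VG n (x - y) := by
  rw [sub_eq_add_neg]; exact hx.add hy.neg

lemma VG.mul {m n : ℤ} {x y : LaurentSeries K} (hx : VG m x) (hy : VG n y) :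
    VG (m + n) (x * y) := by
  unfold VG at *
  rw [HahnSeries.orderTop_mul, WithTop.coe_add]
  exact add_le_add hx hy

lemma VG_one : VG 0 (1 : LaurentSeries K) := by
  unfold VG; rw [HahnSeries.orderTop_one]; rfl

lemma not_VG_one : ¬ VG 1 (1 : LaurentSeries K) := by
  unfold VG; rw [HahnSeries.orderTop_one]
  intro h
  have : (1 : ℤ) ≤ 0 := by exact_mod_cast h
  omega

lemma VG.pow {n : ℤ} {x : LaurentSeries K} (hx : VG n x) (j : ℕ) : VG (j * n) (x ^ j) := by
  induction j with
  | zero => simpa using VG_one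
  | succ j ih =>
    rw [pow_succ]
    refine (ih.mul hx).mono (le_of_eq ?_)
    push_cast; ring

lemma VG_C (c : K) : VG 0 (HahnSeries.C c : LaurentSeries K) := by
  unfold VG
  exact HahnSeries.orderTop_single_le

lemma VG.C_mul {n : ℤ} {x : LaurentSeries K} (hx : VG n x) (c : K) :
    VG n (HahnSeries.C c * x) := by
  simpa using (VG_C c).mul hx

lemma VG_inv {y : LaurentSeries K} (h : ¬ VG 0 y) : VG 1 y⁻¹ := by
  have hy : y ≠ 0 := by
    rintro rfl; exact h (by unfold VG; simp)
  have hmul : y.orderTop + (y⁻¹).orderTop = 0 := by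
    rw [← HahnSeries.orderTop_mul, mul_inv_cancel₀ hy, HahnSeries.orderTop_one]
  unfold VG at *
  rw [← HahnSeries.order_eq_orderTop_of_ne_zero hy] at h hmul
  rw [← HahnSeries.order_eq_orderTop_of_ne_zero (inv_ne_zero hy)] at hmul ⊢
  have h1 : ¬ (0 : ℤ) ≤ y.order := fun h' => h (by exact_mod_cast h')
  have h2 : y.order + (y⁻¹).order = 0 := by exact_mod_cast hmul
  have h3 : (1 : ℤ) ≤ (y⁻¹).order := by omega
  exact_mod_cast h3

lemma ne_zero_of_big {y : LaurentSeries K} (h : ¬ VG 0 y) : y ≠ 0 := by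
  rintro rfl; exact h (by unfold VG; simp)

lemma not_VG_of_adeg {y : LaurentSeries K} (h : 0 < adeg y) : ¬ VG 0 y := by
  have : 0 ≤ y.orderTop ↔ 0 ≤ y.order := HahnSeries.zero_le_orderTop_iff
  unfold VG adeg at *
  intro h'
  have := this.1 (by exact_mod_cast h')
  omega

lemma Tval_eq : Tval K = HahnSeries.single (-1 : ℤ) (1 : K) := by
  unfold Tval
  rw [inv_eq_iff_eq_inv]
  refine eq_inv_of_mul_eq_one_left ?_
  rw [HahnSeries.single_mul_single]
  simp

lemma Tval_ne_zero : Tval K ≠ 0 := by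
  rw [Tval_eq]; simp

lemma VG_Tval : VG (-1) (Tval K) := by
  rw [Tval_eq]; exact HahnSeries.orderTop_single_le

lemma VG_Tval_inv : VG 1 (Tval K)⁻¹ := by
  unfold Tval; rw [inv_inv]; exact HahnSeries.orderTop_single_le

lemma pEval_eq_hom (f : K[X]) : pEval f = pEvalHom K f := rfl

lemma coeff_pEval (f : K[X]) (j : ℕ) : (pEval f).coeff (-(j : ℤ)) = f.coeff j := by
  rw [pEval_eq_hom]
  induction f using Polynomial.induction_on' with
  | add f g hf hg => rw [map_add, HahnSeries.coeff_add, hf, hg, coeff_add]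
  | monomial n c =>
    have : pEvalHom K (monomial n c) = HahnSeries.single (-(n : ℤ)) c := by
      simp only [pEvalHom, coe_eval₂RingHom, eval₂_monomial, Tval_eq]
      rw [HahnSeries.single_pow, HahnSeries.C_apply, HahnSeries.single_mul_single]
      simp
    rw [this, HahnSeries.coeff_single, coeff_monomial]
    congr 1
    apply propext
    constructor <;> intro h <;> omega

/-- A polynomial of absolute value less than one vanishes. -/
lemma eq_zero_of_VG_pEval {f : K[X]} (h : VG 1 (pEval f)) : f = 0 := by
  ext j
  rw [coeff_zero, ← coeff_pEval]
  apply HahnSeries.coeff_eq_zero_of_lt_orderTop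
  refine lt_of_lt_of_le ?_ h
  have : (-(j : ℤ)) < 1 := by omega
  exact_mod_cast this

lemma pEval_injective : Function.Injective (pEval : K[X] → LaurentSeries K) := by
  intro f g h
  have : pEval (f - g) = 0 := by
    rw [pEval_eq_hom, map_sub, sub_eq_zero]; exact h
  exact sub_eq_zero.1 (eq_zero_of_VG_pEval (by rw [this]; unfold VG; simp))

/-- Uniqueness of one step of the continued fraction algorithm. -/
lemma cf_step_unique {f g : K[X]} {x y : LaurentSeries K} (hx : ¬ VG 0 x) (hy : ¬ VG 0 y)
    (h : pEval f + x⁻¹ = pEval g + y⁻¹) : f = g ∧ x = y := by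
  have h1 : pEval (f - g) = y⁻¹ - x⁻¹ := by
    rw [pEval_eq_hom, map_sub, ← pEval_eq_hom, ← pEval_eq_hom]
    linear_combination h
  have h2 : f = g := sub_eq_zero.1
    (eq_zero_of_VG_pEval (by rw [h1]; exact (VG_inv hy).sub (VG_inv hx)))
  refine ⟨h2, inv_injective ?_⟩
  rw [h2] at h
  exact add_left_cancel h

end Valuation

/-! ### Chains of continued fraction steps -/

section Chains

variable {K : Type} [Field K]

/-- If `β` runs the continued fraction algorithm and `β s` agrees with the value of a chain with
polynomial entries `b 1, …, b m` and a tail of absolute value greater than one, then these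
entries are partial quotients. -/
lemma cf_chain_unique {a : ℕ → K[X]} {β : ℕ → LaurentSeries K} (s m : ℕ)
    (hβ : ∀ n, s ≤ n → ¬ VG 0 (β n) ∧ β n = pEval (a n) + (β (n + 1))⁻¹)
    (b : ℕ → K[X]) (Y : ℕ → LaurentSeries K)
    (hY : ∀ i, 1 ≤ i → i ≤ m → Y i = pEval (b i) + (Y (i + 1))⁻¹)
    (hbig : ∀ i, 1 ≤ i → i ≤ m + 1 → ¬ VG 0 (Y i)) (h0 : β s = Y 1) :
    ∀ i, i ≤ m → β (s + i) = Y (i + 1) ∧ ∀ j, j < i → a (s + j) = b (j + 1) := by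
  intro i
  induction i with
  | zero => intro _; exact ⟨h0, fun j hj => absurd hj (by omega)⟩
  | succ i ih =>
    intro hi
    obtain ⟨h1, h2⟩ := ih (by omega)
    have h3 := (hβ (s + i) (by omega)).2
    rw [h1, hY (i + 1) (by omega) hi] at h3
    obtain ⟨h4, h5⟩ := cf_step_unique (hbig (i + 1 + 1) (by omega) (by omega))
      (hβ (s + i + 1) (by omega)).1 h3
    refine ⟨h5.symm, fun j hj => ?_⟩
    rcases Nat.lt_succ_iff_lt_or_eq.1 hj with h | rfl
    · exact h2 j h
    · exact h4.symm

/-- A chain with linear entries `c i * Z` can be built backwards from any tail of absolute value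
greater than one, and all its values have absolute value greater than one. -/
lemma exists_chain (Z : LaurentSeries K) (hZ : VG 1 Z⁻¹) (hZ0 : Z ≠ 0) (m : ℕ) (c : ℕ → K)
    (hc : ∀ i, 1 ≤ i → i ≤ m → c i ≠ 0) (γ : LaurentSeries K) (hγ : ¬ VG 0 γ) :
    ∃ Y : ℕ → LaurentSeries K, Y (m + 1) = γ ∧
      (∀ i, 1 ≤ i → i ≤ m → Y i = HahnSeries.C (c i) * Z + (Y (i + 1))⁻¹) ∧
      ∀ i, 1 ≤ i → i ≤ m + 1 → ¬ VG 0 (Y i) := by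
  let g : ℕ → LaurentSeries K := fun j =>
    Nat.rec γ (fun j y => HahnSeries.C (c (m - j)) * Z + y⁻¹) j
  have hg : ∀ j, g (j + 1) = HahnSeries.C (c (m - j)) * Z + (g j)⁻¹ := fun j => rfl
  have hbig : ∀ j, j ≤ m → ¬ VG 0 (g j) := by
    intro j
    induction j with
    | zero => intro _; exact hγ
    | succ j ih =>
      intro hj h
      rw [hg] at h
      have h1 : VG 0 (HahnSeries.C (c (m - j)) * Z) := by
        have := h.sub ((VG_inv (ih (by omega))).mono (by norm_num : (0 : ℤ) ≤ 1))
        simpa using this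
      have hc' := hc (m - j) (by omega) (by omega)
      have h2 : VG 0 Z := by
        have h3 := h1.C_mul (c (m - j))⁻¹
        rwa [← mul_assoc, ← map_mul, inv_mul_cancel₀ hc', map_one, one_mul] at h3
      have h4 := h2.mul hZ
      rw [mul_inv_cancel₀ hZ0] at h4
      exact not_VG_one (h4.mono (by norm_num))
  refine ⟨fun i => g (m + 1 - i), ?_, ?_, ?_⟩
  · simp [g]
  · intro i h1 h2
    have e1 : m + 1 - i = (m - i) + 1 := by omega
    have e2 : m + 1 - (i + 1) = m - i := by omega
    have e3 : m - (m - i) = i := by omega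
    change g (m + 1 - i) = _ + (g (m + 1 - (i + 1)))⁻¹
    rw [e1, e2, hg, e3]
  · intro i h1 h2
    exact hbig _ (by omega)

/-- The values of a chain are the successive quotients of any sequence `r` obeying the associated
three-term recursion and having the right last quotient. -/
lemma chain_ratio {F : Type} [Field F] (m : ℕ) (x Y r : ℕ → F)
    (hY : ∀ i, 1 ≤ i → i ≤ m → Y i = x i + (Y (i + 1))⁻¹)
    (hY0 : ∀ i, 1 ≤ i → i ≤ m + 1 → Y i ≠ 0)
    (hr : ∀ i, 1 ≤ i → i ≤ m → r (i - 1) = x i * r i + r (i + 1))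
    (hlast : Y (m + 1) * r (m + 1) = r m) (hne : r (m + 1) ≠ 0) :
    ∀ j, j ≤ m → r (m + 1 - j) ≠ 0 ∧ Y (m + 1 - j) * r (m + 1 - j) = r (m - j) := by
  intro j
  induction j with
  | zero => intro _; exact ⟨hne, hlast⟩
  | succ j ih =>
    intro hj
    obtain ⟨h1, h2⟩ := ih (by omega)
    obtain ⟨t, ht⟩ : ∃ t, m = t + 1 + j := ⟨m - j - 1, by omega⟩
    subst ht
    have e1 : t + 1 + j + 1 - j = t + 2 := by omega
    have e2 : t + 1 + j - j = t + 1 := by omega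
    have e3 : t + 1 + j + 1 - (j + 1) = t + 1 := by omega
    have e4 : t + 1 + j - (j + 1) = t := by omega
    rw [e1, e2] at h2
    rw [e1] at h1
    rw [e3, e4]
    have hy := hY0 (t + 2) (by omega) (by omega)
    refine ⟨by rw [← h2]; exact mul_ne_zero hy h1, ?_⟩
    have h3 := hr (t + 1) (by omega) (by omega)
    rw [Nat.add_sub_cancel] at h3
    rw [hY (t + 1) (by omega) (by omega), h3, ← h2]
    field_simp

end Chains

/-! ### Propagation of the hyperquadratic relation -/

section Propagation

variable {K : Type} [Field K]

lemma neg_one_zpow_exp_succ {F : Type} [Field F] (g : F) (i : ℕ) :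
    g ^ ((-1 : ℤ) ^ (i + 1)) = (g ^ ((-1 : ℤ) ^ i))⁻¹ := by
  rw [pow_succ, mul_neg_one, zpow_neg]

/-- If `|b| > 1`, the tail `γ` determined by a relation `b ^ p = e P γ + c Q` has absolute value
greater than one, because `|P|, |Q| ≤ |T|^d` with `d < p`. -/
lemma big_of_relation {p d : ℕ} (hd : d < p) {P Q b γ : LaurentSeries K} (e c : K)
    (hPv : VG (-(d : ℤ)) P) (hQv : VG (-(d : ℤ)) Q) (hb : ¬ VG 0 b)
    (h : b ^ p = HahnSeries.C e * P * γ + HahnSeries.C c * Q) : ¬ VG 0 γ := by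
  intro hγ
  have h1 : VG (-(d : ℤ)) (b ^ p) := by
    rw [h]
    refine VG.add ?_ (hQv.C_mul c)
    simpa using (hPv.C_mul e).mul hγ
  have h2 := h1.mul ((VG_inv hb).pow p)
  rw [← mul_pow, mul_inv_cancel₀ (ne_zero_of_big hb), one_pow] at h2
  refine not_VG_one (h2.mono ?_)
  rw [mul_one]; omega

/-- One period of the expansion.  A relation `β n ^ p = E P β (f n) + c Q` and the value of the
`n`-th partial quotient determine the `2k+1` partial quotients starting at `f n`, and reproduce
the relation for `n + 1`. The hypothesis `hcore` encodes the expansion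
`P X / (Q X + 1) = [v₁ Z, …, v_{2k} Z, (X + c₀² Q) / P]`. -/
lemma propagate (p k : ℕ) [Fact p.Prime] [CharP K p] (hpk : 2 * k < p)
    (a : ℕ → K[X]) (β : ℕ → LaurentSeries K)
    (hβ : ∀ n, 1 ≤ n → ¬ VG 0 (β n) ∧ β n = pEval (a n) + (β (n + 1))⁻¹)
    (Z P Q : LaurentSeries K) (hZ : VG 1 Z⁻¹) (hZ0 : Z ≠ 0) (hP0 : P ≠ 0)
    (hPv : VG (-((2 * k : ℕ) : ℤ)) P) (hQv : VG (-((2 * k : ℕ) : ℤ)) Q)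
    (A : ℕ → K[X]) (hA0 : pEval (A 0) = Z) (θ c0 : K)
    (hA : ∀ i, pEval (A i) ^ p = P * pEval (A (i + 1)) + HahnSeries.C (θ ^ i * c0) * Q)
    (vs : ℕ → K) (hvs : ∀ i, 1 ≤ i → i ≤ 2 * k → vs i ≠ 0)
    (hcore : ∀ X, ∃ r : ℕ → LaurentSeries K, r 0 = P * X ∧ r 1 = Q * X + 1 ∧
      (∀ i, 1 ≤ i → i ≤ 2 * k → r (i - 1) = HahnSeries.C (vs i) * Z * r i + r (i + 1)) ∧
      r (2 * k) * P = r (2 * k + 1) * (X + HahnSeries.C (c0 ^ 2) * Q) ∧ r (2 * k + 1) ≠ 0)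
    (n m ix : ℕ) (hn : 1 ≤ n) (hm : 1 ≤ m) (μ μ' E E' c c' D : K) (μs : ℕ → K)
    (hE : E * E' = 1) (hD : D ≠ 0) (hμ : μ ^ p = E * μ') (hDeq : μ ^ p * (θ ^ ix * c0) - c = D)
    (hc' : c' * D = -c0 ^ 2)
    (hμs : ∀ i, 1 ≤ i → i ≤ 2 * k → μs i = vs i * (D / E) ^ ((-1 : ℤ) ^ i))
    (hR : β n ^ p = HahnSeries.C E * P * β m + HahnSeries.C c * Q)
    (han : a n = C μ * A ix) :
    a m = C μ' * A (ix + 1) ∧ (∀ i, 1 ≤ i → i ≤ 2 * k → a (m + i) = C (μs i) * A 0) ∧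
      β (n + 1) ^ p = HahnSeries.C E' * P * β (m + (2 * k + 1)) + HahnSeries.C c' * Q := by
  have hE0 : E ≠ 0 := left_ne_zero_of_mul_eq_one hE
  have hE0' : E' ≠ 0 := right_ne_zero_of_mul_eq_one hE
  have hC : ∀ x : K, x ≠ 0 → (HahnSeries.C x : LaurentSeries K) ≠ 0 := fun x hx => by
    simpa using hx
  have : CharP (LaurentSeries K) p :=
    charP_of_injective_ringHom (f := (HahnSeries.C : K →+* LaurentSeries K))
      HahnSeries.C_injective p
  have hpe : ∀ (x : K) (f : K[X]), pEval (C x * f) = HahnSeries.C x * pEval f := by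
    intro x f
    simp [pEval_eq_hom, pEvalHom]
  have hbn := (hβ (n + 1) (by omega)).1
  set B := β (n + 1) ^ p with hB
  have hB0 : B ≠ 0 := pow_ne_zero _ (ne_zero_of_big hbn)
  set γ : LaurentSeries K := (B - HahnSeries.C c' * Q) / (HahnSeries.C E' * P) with hγ
  have hden : HahnSeries.C E' * P ≠ 0 := mul_ne_zero (hC _ hE0') hP0
  have hγeq : B = HahnSeries.C E' * P * γ + HahnSeries.C c' * Q := by
    rw [hγ, mul_div_cancel₀ _ hden]; ring
  have hγbig : ¬ VG 0 γ := big_of_relation hpk E' c' hPv hQv hbn hγeq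
  set g : K := D / E with hg
  have hg0 : g ≠ 0 := div_ne_zero hD hE0
  obtain ⟨Y, hYl, hYs, hYb⟩ := exists_chain Z hZ hZ0 (2 * k) μs
    (fun i h1 h2 => by
      rw [hμs i h1 h2]; exact mul_ne_zero (hvs i h1 h2) (zpow_ne_zero _ hg0)) γ hγbig
  obtain ⟨r, hr0, hr1, hrs, hrl, hrne⟩ := hcore (HahnSeries.C D * B)
  -- removing the factors `g ^ (±1)` from the entries of the chain
  have hG0 : ∀ i : ℕ, (HahnSeries.C (g ^ ((-1 : ℤ) ^ i)) : LaurentSeries K) ≠ 0 :=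
    fun i => hC _ (zpow_ne_zero _ hg0)
  have hGs : ∀ i : ℕ, (HahnSeries.C (g ^ ((-1 : ℤ) ^ (i + 1))) : LaurentSeries K)
      = (HahnSeries.C (g ^ ((-1 : ℤ) ^ i)))⁻¹ := fun i => by
    rw [neg_one_zpow_exp_succ, map_inv₀]
  have hratio := chain_ratio (2 * k) (fun i => HahnSeries.C (vs i) * Z)
    (fun i => (HahnSeries.C (g ^ ((-1 : ℤ) ^ i)))⁻¹ * Y i) r
    (fun i h1 h2 => by
      have hg1 := hG0 i
      rw [hYs i h1 h2, hμs i h1 h2, hGs, map_mul, inv_inv, mul_inv, mul_add]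
      field_simp)
    (fun i h1 h2 => mul_ne_zero (inv_ne_zero (hG0 i)) (ne_zero_of_big (hYb i h1 h2)))
    hrs
    (by
      have e1 : g ^ ((-1 : ℤ) ^ (2 * k + 1)) = g⁻¹ := by
        rw [pow_succ, pow_mul]; simp
      have e2 : E * (D / E) = D := by field_simp
      apply mul_right_cancel₀ hP0
      rw [hrl, e1, map_inv₀, inv_inv, hYl]
      have e3 : HahnSeries.C g * γ * P = HahnSeries.C D * B + HahnSeries.C (c0 ^ 2) * Q := by
        have e4 : (HahnSeries.C g : LaurentSeries K) = HahnSeries.C (D * E') := by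
          congr 1; rw [hg, div_eq_iff hE0]; linear_combination -D * hE
        have e5 : (HahnSeries.C (c' * D) : LaurentSeries K) = HahnSeries.C (-c0 ^ 2) := by
          rw [hc']
        rw [e4]
        simp only [map_mul, map_neg] at e5 ⊢
        linear_combination (-HahnSeries.C D : LaurentSeries K) * hγeq - Q * e5
      linear_combination r (2 * k + 1) * e3)
    hrne
  obtain ⟨hr1ne, hr01⟩ := hratio (2 * k) le_rfl
  have e0 : 2 * k + 1 - 2 * k = 1 := by omega
  simp only [e0, Nat.sub_self, hr0, hr1] at hr1ne hr01
  have hgC := hC g hg0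
  have hDC := hC D hD
  have hEC := hC E hE0
  have hgE : (HahnSeries.C g * HahnSeries.C E : LaurentSeries K) = HahnSeries.C D := by
    rw [← map_mul, hg, div_mul_cancel₀ _ hE0]
  have hY1 : (Y 1)⁻¹ * (HahnSeries.C E * P) = HahnSeries.C D * Q + B⁻¹ := by
    have hY1ne := ne_zero_of_big (hYb 1 le_rfl (by omega))
    have h1 : (HahnSeries.C (g ^ ((-1 : ℤ) ^ 1)))⁻¹ = (HahnSeries.C g : LaurentSeries K) := by
      simp
    rw [h1] at hr01
    rw [inv_mul_eq_iff_eq_mul₀ hY1ne]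
    apply mul_right_cancel₀ hB0
    apply mul_left_cancel₀ hgC
    have : B⁻¹ * B = 1 := inv_mul_cancel₀ hB0
    linear_combination (-1) * hr01 + P * B * hgE - HahnSeries.C g * Y 1 * this
  have hβm : β m = pEval (C μ' * A (ix + 1)) + (Y 1)⁻¹ := by
    have hpow : β n ^ p = HahnSeries.C (μ ^ p) * pEval (A ix) ^ p + B⁻¹ := by
      rw [(hβ n hn).2, add_pow_char, han, hpe, mul_pow, map_pow, inv_pow]
    have h2 : (HahnSeries.C (μ ^ p * (θ ^ ix * c0) - c) : LaurentSeries K) = HahnSeries.C D := by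
      rw [hDeq]
    have h3 : (HahnSeries.C (μ ^ p) : LaurentSeries K) = HahnSeries.C E * HahnSeries.C μ' := by
      rw [hμ, map_mul]
    rw [hA] at hpow
    rw [map_sub, map_mul] at h2
    rw [hpe]
    apply mul_left_cancel₀ (mul_ne_zero hEC hP0)
    linear_combination hpow - hR - hY1 + Q * h2 + P * pEval (A (ix + 1)) * h3
  have hm' := hβ m hm
  rw [hm'.2] at hβm
  obtain ⟨ham, hβm1⟩ := cf_step_unique (hβ (m + 1) (by omega)).1 (hYb 1 le_rfl (by omega)) hβm
  have hun := cf_chain_unique (m + 1) (2 * k) (fun j hj => hβ j (by omega))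
    (fun i => C (μs i) * A 0) Y
    (fun i h1 h2 => by rw [hYs i h1 h2, hpe, hA0]) hYb hβm1 (2 * k) le_rfl
  refine ⟨ham, fun i h1 h2 => ?_, ?_⟩
  · have := hun.2 (i - 1) (by omega)
    rwa [show m + 1 + (i - 1) = m + i by omega, show i - 1 + 1 = i by omega] at this
  · rw [show m + (2 * k + 1) = m + 1 + 2 * k by omega, hun.1, hYl]
    exact hγeq

end Propagation

/-! ### The polynomials `A_{i,k}` and the exponents `i(n)` -/

/-- The remainder of `A_{i,k} ^ p` modulo `P_k` is `θ ^ i` times that of `T ^ p`.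
The reason is that `A_{i,k} ≡ θ ^ i T` modulo `T² - 1`, so that
`A_{i,k} ^ p ≡ θ ^ i T ^ p` modulo `(T² - 1) ^ p`, which is a multiple of `P_k`. -/
lemma Aseq_pow (p k : ℕ) [Fact p.Prime] (hkp : k < p) (θ c0 : ZMod p)
    (A1 G1 q : (ZMod p)[X]) (hX : X ^ p = Pk k * A1 + C c0 * q)
    (hA1 : A1 = C θ * X + (X ^ 2 - 1) * G1) (hq : q.degree < (2 * k : ℕ)) (i : ℕ) :
    (∃ G, Aseq (ZMod p) p k i = C (θ ^ i) * X + (X ^ 2 - 1) * G) ∧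
      Aseq (ZMod p) p k i ^ p = Pk k * Aseq (ZMod p) p k (i + 1) + C (θ ^ i * c0) * q := by
  have hmon0 : (X ^ 2 - 1 : (ZMod p)[X]).Monic := by
    rw [← C_1]; exact monic_X_pow_sub_C 1 (by norm_num)
  have hmon : (Pk k : (ZMod p)[X]).Monic := hmon0.pow k
  have hdeg : (Pk k : (ZMod p)[X]).degree = (2 * k : ℕ) := by
    unfold Pk
    rw [degree_pow, ← C_1, degree_X_pow_sub_C (by norm_num)]
    simp [mul_comm]
  have step : ∀ j, ∀ G, Aseq (ZMod p) p k j = C (θ ^ j) * X + (X ^ 2 - 1) * G →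
      Aseq (ZMod p) p k (j + 1) = C (θ ^ j) * A1 + (X ^ 2 - 1) ^ (p - k) * G ^ p ∧
      Aseq (ZMod p) p k j ^ p = Pk k * Aseq (ZMod p) p k (j + 1) + C (θ ^ j * c0) * q := by
    intro j G hG
    have hpow : Aseq (ZMod p) p k j ^ p =
        Pk k * (C (θ ^ j) * A1 + (X ^ 2 - 1) ^ (p - k) * G ^ p) + C (θ ^ j * c0) * q := by
      have hfr : (C (θ ^ j) : (ZMod p)[X]) ^ p = C (θ ^ j) := by
        rw [← C_pow, ZMod.pow_card]
      have hsplit : (X ^ 2 - 1 : (ZMod p)[X]) ^ p = Pk k * (X ^ 2 - 1) ^ (p - k) := by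
        unfold Pk; rw [← pow_add]; congr 1; omega
      rw [hG, add_pow_char, mul_pow, mul_pow, hfr, hX, hsplit, C_mul]
      ring
    have hdiv : Aseq (ZMod p) p k (j + 1)
        = C (θ ^ j) * A1 + (X ^ 2 - 1) ^ (p - k) * G ^ p := by
      change Aseq (ZMod p) p k j ^ p / Pk k = _
      rw [← divByMonic_eq_div _ hmon]
      refine (div_modByMonic_unique _ (C (θ ^ j * c0) * q) hmon ⟨?_, ?_⟩).1
      · rw [hpow]; ring
      · rw [hdeg]
        refine lt_of_le_of_lt ?_ hq
        rw [degree_mul]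
        calc _ ≤ 0 + q.degree := add_le_add degree_C_le le_rfl
          _ = q.degree := zero_add _
    exact ⟨hdiv, by rw [hdiv]; exact hpow⟩
  have hex : ∀ j, ∃ G, Aseq (ZMod p) p k j = C (θ ^ j) * X + (X ^ 2 - 1) * G := by
    intro j
    induction j with
    | zero => exact ⟨0, by simp [Aseq]⟩
    | succ j ih =>
      obtain ⟨G, hG⟩ := ih
      refine ⟨C (θ ^ j) * G1 + (X ^ 2 - 1) ^ (p - k - 1) * G ^ p, ?_⟩
      rw [(step j G hG).1, hA1, show p - k = p - k - 1 + 1 by omega, Nat.add_sub_cancel,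
        pow_succ θ j, C_mul]
      ring
  obtain ⟨G, hG⟩ := hex i
  exact ⟨⟨G, hG⟩, (step i G hG).2⟩

lemma largestPow_isGreatest (m N : ℕ) (hm : 2 ≤ m) (hN : 0 < N) :
    IsGreatest {j : ℕ | m ^ j ∣ N} (largestPow m N) := by
  have hb : BddAbove {j : ℕ | m ^ j ∣ N} := by
    refine ⟨N, fun j hj => ?_⟩
    have h1 : m ^ j ≤ N := Nat.le_of_dvd hN hj
    have h2 : j < m ^ j := Nat.lt_pow_self (by omega)
    omega
  exact ⟨Nat.sSup_mem ⟨0, by simp⟩ hb, fun j hj => le_csSup hb hj⟩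

lemma largestPow_mul (m N : ℕ) (hm : 2 ≤ m) (hN : 0 < N) :
    largestPow m (m * N) = largestPow m N + 1 := by
  obtain ⟨h1, h2⟩ := largestPow_isGreatest m N hm hN
  refine IsGreatest.csSup_eq ⟨?_, ?_⟩
  · change m ^ (largestPow m N + 1) ∣ m * N
    rw [pow_succ, mul_comm]
    exact Nat.mul_dvd_mul_left m h1
  · intro j hj
    rcases j with _ | j
    · omega
    · have hj' : m ^ (j + 1) ∣ m * N := hj
      rw [pow_succ, mul_comm] at hj'
      have : j ≤ largestPow m N := h2 (Nat.dvd_of_mul_dvd_mul_left (by omega) hj')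
      omega

lemma largestPow_eq_zero (m N : ℕ) (h : ¬ m ∣ N) : largestPow m N = 0 := by
  refine IsGreatest.csSup_eq ⟨by simp, ?_⟩
  intro j hj
  rcases j with _ | j
  · exact le_rfl
  · exact absurd (dvd_trans (dvd_pow_self m (by omega)) hj) h

/-! ### The sequence `δ_n` -/

/-- The recursions for `λ_n` and `δ_n` imply `δ_n = θ^{i(n)} λ_n + 1/δ_{n-1}` for every `n ≥ 1`,
where `δ_0 = 2kθ/ε₂`, and none of the `λ_n`, `δ_n` vanishes. Here
`ρ i = i v_i / (2k - 2i + 1)`. -/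
lemma delta_step {F : Type} [Field F] (k l : ℕ) (idx : ℕ → ℕ)
    (hidx1 : ∀ n, 1 ≤ n → idx ((2 * k + 1) * n + l - 2 * k) = idx n + 1)
    (hidx0 : ∀ n, 1 ≤ n → ∀ i, 1 ≤ i → i ≤ 2 * k →
      idx ((2 * k + 1) * n + l - 2 * k + i) = 0)
    (hk : 1 ≤ k) (hl : 1 ≤ l)
    (ε₁ ε₂ θ κ : F) (hε₁ : ε₁ ≠ 0) (hε₂ : ε₂ ≠ 0) (hθ : θ ≠ 0) (hκ : κ ≠ 0)
    (vs ρ lam δ : ℕ → F)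
    (hvs : ∀ i, 1 ≤ i → i ≤ 2 * k → vs i ≠ 0)
    (hρ0 : ∀ i, 1 ≤ i → i ≤ 2 * k → ρ i ≠ 0)
    (hρ1 : ρ 1 = -vs 1 + κ)
    (hρs : ∀ i, 1 ≤ i → i < 2 * k → ρ (i + 1) = -vs (i + 1) + (ρ i)⁻¹)
    (hρl : ρ (2 * k) * (κ * θ) * θ = 1)
    (hlamrec : ∀ n, 1 ≤ n →
      lam ((2 * k + 1) * n + l - 2 * k) = ε₁ ^ ((-1 : ℤ) ^ n) * lam n ∧
      ∀ i, 1 ≤ i → i ≤ 2 * k →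
        lam ((2 * k + 1) * n + l - 2 * k + i)
          = -vs i * ε₁ ^ ((-1 : ℤ) ^ (n + i)) * (κ * θ * δ n) ^ ((-1 : ℤ) ^ i))
    (hδrec : ∀ n, 1 ≤ n →
      δ ((2 * k + 1) * n + l - 2 * k) = ε₁ ^ ((-1 : ℤ) ^ n) * δ n * θ ∧
      ∀ i, 1 ≤ i → i ≤ 2 * k →
        δ ((2 * k + 1) * n + l - 2 * k + i)
          = ε₁ ^ ((-1 : ℤ) ^ (n + i)) * ρ i * (κ * θ * δ n) ^ ((-1 : ℤ) ^ i))
    (hδ0 : δ 0 = κ * θ / ε₂) (hδl : δ l = κ * ε₁ / ε₂)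
    (hinit : ∀ n, 1 ≤ n → n ≤ l → lam n ≠ 0 ∧ δ n ≠ 0 ∧
      δ n = θ ^ idx n * lam n + (δ (n - 1))⁻¹) :
    ∀ n, 1 ≤ n → lam n ≠ 0 ∧ δ n ≠ 0 ∧ δ n = θ ^ idx n * lam n + (δ (n - 1))⁻¹ := by
  intro n
  induction n using Nat.strong_induction_on with
  | _ n ih =>
  intro hn
  by_cases hnl : n ≤ l
  · exact hinit n hn hnl
  obtain ⟨m, i, hm, hi, hni⟩ : ∃ m i, 1 ≤ m ∧ i ≤ 2 * k ∧
      n = (2 * k + 1) * m + l - 2 * k + i := by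
    refine ⟨(n - l - 1) / (2 * k + 1) + 1, (n - l - 1) % (2 * k + 1),
      Nat.le_add_left _ _, ?_, ?_⟩
    · have := Nat.mod_lt (n - l - 1) (show 0 < 2 * k + 1 by omega)
      omega
    · have := Nat.div_add_mod (n - l - 1) (2 * k + 1)
      rw [mul_add, mul_one]
      omega
  have hmf : (2 * k + 1) * m = 2 * k * m + m := by ring
  have hkm : 2 * k ≤ 2 * k * m := Nat.le_mul_of_pos_right _ (by omega)
  obtain ⟨hlm, hdm, hdeq⟩ := ih m (by omega) hm
  obtain ⟨hl0, hli⟩ := hlamrec m hm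
  obtain ⟨hd0, hdi⟩ := hδrec m hm
  have he : ε₁ ^ ((-1 : ℤ) ^ m) ≠ 0 := zpow_ne_zero _ hε₁
  rcases Nat.eq_zero_or_pos i with rfl | hipos
  · rw [add_zero] at hni
    subst hni
    rw [hl0, hd0, hidx1 m hm]
    refine ⟨mul_ne_zero he hlm, mul_ne_zero (mul_ne_zero he hdm) hθ, ?_⟩
    have hprev : (δ ((2 * k + 1) * m + l - 2 * k - 1))⁻¹
        = ε₁ ^ ((-1 : ℤ) ^ m) * θ * (δ (m - 1))⁻¹ := by
      by_cases hm1 : m = 1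
      · subst hm1
        rw [show (2 * k + 1) * 1 + l - 2 * k - 1 = l by omega, hδl, Nat.sub_self, hδ0]
        simp only [pow_one, zpow_neg_one]
        field_simp
      · obtain ⟨t, rfl⟩ : ∃ t, m = t + 1 := ⟨m - 1, by omega⟩
        have ht := (hδrec t (by omega)).2 (2 * k) (by omega) le_rfl
        rw [show (2 * k + 1) * (t + 1) + l - 2 * k - 1 = (2 * k + 1) * t + l - 2 * k + 2 * k by
          have : 2 * k ≤ 2 * k * t := Nat.le_mul_of_pos_right _ (by omega)
          have : (2 * k + 1) * t = 2 * k * t + t := by ring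
          rw [mul_add]; omega, ht, Nat.add_sub_cancel]
        have h2 : (-1 : ℤ) ^ (2 * k) = 1 := by rw [pow_mul]; simp
        have het : ε₁ ^ ((-1 : ℤ) ^ t) ≠ 0 := zpow_ne_zero _ hε₁
        have hdt := (ih t (by omega) (by omega)).2.1
        have hρk := hρ0 (2 * k) (by omega) le_rfl
        rw [pow_add, h2, mul_one, zpow_one, neg_one_zpow_exp_succ]
        field_simp
        linear_combination -hρl
    rw [hprev]
    nth_rewrite 1 [hdeq]
    rw [pow_succ]
    ring
  · have h1 := hli i hipos hi
    have h2 := hdi i hipos hi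
    rw [← hni] at h1 h2
    have hY : κ * θ * δ m ≠ 0 := mul_ne_zero (mul_ne_zero hκ hθ) hdm
    have hdn : δ n ≠ 0 := by
      rw [h2]
      exact mul_ne_zero (mul_ne_zero (zpow_ne_zero _ hε₁) (hρ0 i hipos hi)) (zpow_ne_zero _ hY)
    refine ⟨?_, hdn, ?_⟩
    · rw [h1]
      exact mul_ne_zero (mul_ne_zero (neg_ne_zero.2 (hvs i hipos hi)) (zpow_ne_zero _ hε₁))
        (zpow_ne_zero _ hY)
    · have hix : idx n = 0 := by rw [hni]; exact hidx0 m hm i hipos hi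
      rw [hix, pow_zero, one_mul, h1, h2]
      obtain ⟨t, rfl⟩ : ∃ t, i = t + 1 := ⟨i - 1, by omega⟩
      rw [show n - 1 = (2 * k + 1) * m + l - 2 * k + t by omega]
      rcases Nat.eq_zero_or_pos t with rfl | ht
      · rw [add_zero, hd0]
        simp only [zero_add, pow_one, zpow_neg_one, neg_one_zpow_exp_succ]
        rw [hρ1]
        field_simp
      · rw [hdi t ht (by omega), hρs t ht (by omega), ← add_assoc m t 1, neg_one_zpow_exp_succ,
          neg_one_zpow_exp_succ]
        have hρt := hρ0 t ht (by omega)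
        have hzt : (κ * θ * δ m) ^ ((-1 : ℤ) ^ t) ≠ 0 := zpow_ne_zero _ hY
        have het : ε₁ ^ ((-1 : ℤ) ^ (m + t)) ≠ 0 := zpow_ne_zero _ hε₁
        field_simp

/-! ### From the data of the expansion to all partial quotients -/

section Assembly

lemma VG_sum {K : Type} [Field K] {ι : Type} (s : Finset ι) (f : ι → LaurentSeries K) (n : ℤ)
    (h : ∀ i ∈ s, VG n (f i)) : VG n (∑ i ∈ s, f i) := by
  classical
  induction s using Finset.induction_on with
  | empty => unfold VG; simp
  | insert i s hi ih =>
    rw [Finset.sum_insert hi]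
    exact (h i (by simp)).add (ih fun j hj => h j (by simp [hj]))

/-- Evaluation of a polynomial with coefficients in the prime field at a Laurent series. -/
def evZ {p : ℕ} [Fact p.Prime] {K : Type} [Field K] [Algebra (ZMod p) K] (Z : LaurentSeries K) :
    (ZMod p)[X] →+* LaurentSeries K :=
  eval₂RingHom ((HahnSeries.C : K →+* LaurentSeries K).comp (algebraMap (ZMod p) K)) Z

variable {p : ℕ} [Fact p.Prime] {K : Type} [Field K] [Algebra (ZMod p) K]

lemma evZ_X (Z : LaurentSeries K) : evZ Z (X : (ZMod p)[X]) = Z := by simp [evZ]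

lemma evZ_C (Z : LaurentSeries K) (c : ZMod p) :
    evZ Z (C c) = HahnSeries.C (algebraMap (ZMod p) K c) := by simp [evZ]

lemma pEval_comp (f : (ZMod p)[X]) (c : K) :
    pEval ((f.map (algebraMap (ZMod p) K)).comp (C c * X))
      = evZ (HahnSeries.C c * Tval K) f := by
  unfold pEval evZ comp
  rw [eval₂_map]
  change _ = eval₂ _ _ f
  have h1 : (eval₂RingHom (HahnSeries.C : K →+* LaurentSeries K) (Tval K)) (C c * X)
      = HahnSeries.C c * Tval K := by simp
  rw [← coe_eval₂RingHom, hom_eval₂, h1]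
  congr 1
  ext x
  simp

lemma VG_evZ {Z : LaurentSeries K} (hZ : VG (-1) Z) (f : (ZMod p)[X]) (d : ℕ)
    (hd : f.natDegree ≤ d) : VG (-(d : ℤ)) (evZ Z f) := by
  unfold evZ
  rw [coe_eval₂RingHom, eval₂_eq_sum_range]
  refine VG_sum _ _ _ fun i hi => ?_
  rw [Finset.mem_range] at hi
  exact (VG.C_mul (hZ.pow i) _).mono (by omega)

/-- All partial quotients are determined once the first `l` of them are of the required shape and
the first hyperquadratic relation holds. Here `s = v^{p-1} = ±1`, and `q` is the polynomial
`Q_k`; `hstart` says that `α = β 1` is the value of the chain `x 1, …, x l` followed by the tail `γ`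
which the relation defines. -/
lemma assemble [CharP K p] (k l : ℕ) (hpk : 2 * k < p) (hk : 1 ≤ k) (hl : 1 ≤ l) (idx : ℕ → ℕ)
    (hidx1 : ∀ n, 1 ≤ n → idx ((2 * k + 1) * n + l - 2 * k) = idx n + 1)
    (hidx0 : ∀ n, 1 ≤ n → ∀ i, 1 ≤ i → i ≤ 2 * k →
      idx ((2 * k + 1) * n + l - 2 * k + i) = 0)
    (v s : K) (hv0 : v ≠ 0) (hs : v ^ p = s * v) (hs2 : s ^ 2 = 1)
    (a : ℕ → K[X]) (β : ℕ → LaurentSeries K)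
    (hβ : ∀ n, 1 ≤ n → ¬ VG 0 (β n) ∧ β n = pEval (a n) + (β (n + 1))⁻¹)
    (ε₁ ε₂ θ κ : ZMod p) (hε₁ : ε₁ ≠ 0) (hθ : θ ≠ 0) (hκ : κ ≠ 0)
    (vs lam δ : ℕ → ZMod p) (hvs : ∀ i, 1 ≤ i → i ≤ 2 * k → vs i ≠ 0)
    (hδ0 : δ 0 = κ * θ / ε₂)
    (hδ : ∀ n, 1 ≤ n → lam n ≠ 0 ∧ δ n ≠ 0 ∧ δ n = θ ^ idx n * lam n + (δ (n - 1))⁻¹)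
    (hlamrec : ∀ n, 1 ≤ n →
      lam ((2 * k + 1) * n + l - 2 * k) = ε₁ ^ ((-1 : ℤ) ^ n) * lam n ∧
      ∀ i, 1 ≤ i → i ≤ 2 * k →
        lam ((2 * k + 1) * n + l - 2 * k + i)
          = -vs i * ε₁ ^ ((-1 : ℤ) ^ (n + i)) * (κ * θ * δ n) ^ ((-1 : ℤ) ^ i))
    (A1 G1 q : (ZMod p)[X]) (hX : X ^ p = Pk k * A1 + C (-(κ * θ)) * q)
    (hA1 : A1 = C θ * X + (X ^ 2 - 1) * G1) (hq : q.degree < (2 * k : ℕ))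
    (Z : LaurentSeries K) (hZ : Z = HahnSeries.C v⁻¹ * Tval K)
    (hcore : (Z ^ 2 - 1) ^ k ≠ 0 → ∀ Y, ∃ r : ℕ → LaurentSeries K,
      r 0 = (Z ^ 2 - 1) ^ k * Y ∧ r 1 = evZ Z q * Y + 1 ∧
      (∀ i, 1 ≤ i → i ≤ 2 * k →
        r (i - 1) = HahnSeries.C (algebraMap (ZMod p) K (vs i)) * Z * r i + r (i + 1)) ∧
      r (2 * k) * (Z ^ 2 - 1) ^ k
        = r (2 * k + 1) * (Y + HahnSeries.C (algebraMap (ZMod p) K (κ * θ) ^ 2) * evZ Z q) ∧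
      r (2 * k + 1) ≠ 0)
    (x : ℕ → LaurentSeries K) (hx : ∀ i, 1 ≤ i → i ≤ l → idx i = 0 ∧
      x i = HahnSeries.C (algebraMap (ZMod p) K (lam i) * v ^ ((-1 : ℤ) ^ i)) * Z)
    (E c : K) (hE : E = s * v⁻¹ * algebraMap (ZMod p) K ε₁ * (v ^ ((-1 : ℤ) ^ (l + 1)))⁻¹)
    (hc : c = s * v⁻¹ * algebraMap (ZMod p) K ε₂)
    (hstart : ∀ γ, β 1 ^ p = HahnSeries.C E * (Z ^ 2 - 1) ^ k * γ + HahnSeries.C c * evZ Z q →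
      ∃ r : ℕ → LaurentSeries K, (∀ i, 1 ≤ i → i ≤ l → r (i - 1) = x i * r i + r (i + 1)) ∧
        r l = γ ∧ r (l + 1) = 1 ∧
        HahnSeries.C E * (Z ^ 2 - 1) ^ k * (β 1 * r 1) = HahnSeries.C E * (Z ^ 2 - 1) ^ k * r 0) :
    ∀ n, 1 ≤ n → lam n ≠ 0 ∧
      a n = C (algebraMap (ZMod p) K (lam n) * v ^ ((-1 : ℤ) ^ n)) *
        ((Aseq (ZMod p) p k (idx n)).map (algebraMap (ZMod p) K)).comp (C v⁻¹ * X) := by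
  set ι := algebraMap (ZMod p) K with hι
  have hιinj : Function.Injective ι := ι.injective
  have hι0 : ∀ y, y ≠ 0 → ι y ≠ 0 := fun y hy => by simpa using hy
  have hs0 : s ≠ 0 := by rintro rfl; simp at hs2
  have hC : ∀ y : K, y ≠ 0 → (HahnSeries.C y : LaurentSeries K) ≠ 0 := fun y hy => by
    simpa using hy
  set A : ℕ → K[X] := fun i => ((Aseq (ZMod p) p k i).map ι).comp (C v⁻¹ * X) with hA
  have hAev : ∀ i, pEval (A i) = evZ Z (Aseq (ZMod p) p k i) := fun i => by
    rw [hZ]; exact pEval_comp _ _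
  have hA0 : pEval (A 0) = Z := by rw [hAev]; exact evZ_X Z
  have hZ0 : Z ≠ 0 := by rw [hZ]; exact mul_ne_zero (hC _ (inv_ne_zero hv0)) Tval_ne_zero
  have hZinv : VG 1 Z⁻¹ := by
    rw [hZ, mul_inv, ← map_inv₀]; exact VG_Tval_inv.C_mul _
  have hZv : VG (-1) Z := by rw [hZ]; exact VG_Tval.C_mul _
  set P : LaurentSeries K := (Z ^ 2 - 1) ^ k with hP
  set Q : LaurentSeries K := evZ Z q with hQ
  have hZ1 : Z ^ 2 - 1 ≠ 0 := by
    intro h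
    have h1 := hZinv.pow 2
    rw [inv_pow, sub_eq_zero.1 h, inv_one] at h1
    exact not_VG_one (h1.mono (by norm_num))
  have hP0 : P ≠ 0 := pow_ne_zero _ hZ1
  have hPev : evZ Z (Pk k : (ZMod p)[X]) = P := by
    simp [Pk, evZ_X, hP]
  have hPv : VG (-((2 * k : ℕ) : ℤ)) P := by
    have h1 : VG (-2) (Z ^ 2 - 1) :=
      ((hZv.pow 2).mono (by norm_num)).sub (VG_one.mono (by norm_num))
    exact (h1.pow k).mono (by push_cast; omega)
  have hQv : VG (-((2 * k : ℕ) : ℤ)) Q :=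
    VG_evZ hZv q _ (natDegree_le_of_degree_le hq.le)
  have hApow : ∀ i, pEval (A i) ^ p
      = P * pEval (A (i + 1)) + HahnSeries.C (ι θ ^ i * ι (-(κ * θ))) * Q := by
    intro i
    have h := (Aseq_pow p k (by omega) θ _ A1 G1 q hX hA1 hq i).2
    rw [hAev, hAev, ← map_pow, h, map_add, map_mul, map_mul, hPev, evZ_C, map_mul ι, map_pow ι]
  -- the first `l` partial quotients and the first relation
  have hpe : ∀ (y : K) (f : K[X]), pEval (C y * f) = HahnSeries.C y * pEval f := by
    intro y f
    simp [pEval_eq_hom, pEvalHom]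
  have hw0 : ∀ n : ℕ, v ^ ((-1 : ℤ) ^ n) ≠ 0 := fun n => zpow_ne_zero _ hv0
  have hE0 : E ≠ 0 := by
    rw [hE]
    exact mul_ne_zero (mul_ne_zero (mul_ne_zero hs0 (inv_ne_zero hv0)) (hι0 _ hε₁))
      (inv_ne_zero (hw0 _))
  have hinit : (∀ j, 1 ≤ j → j ≤ l → a j = C (ι (lam j) * v ^ ((-1 : ℤ) ^ j)) * A (idx j)) ∧
      β 1 ^ p = HahnSeries.C E * P * β (l + 1) + HahnSeries.C c * Q := by
    have hden : HahnSeries.C E * P ≠ 0 := mul_ne_zero (hC _ hE0) hP0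
    obtain ⟨γ, hγ⟩ : ∃ γ, β 1 ^ p = HahnSeries.C E * P * γ + HahnSeries.C c * Q :=
      ⟨(β 1 ^ p - HahnSeries.C c * Q) / (HahnSeries.C E * P), by
        rw [mul_div_cancel₀ _ hden]; ring⟩
    have hγbig := big_of_relation hpk E c hPv hQv (hβ 1 le_rfl).1 hγ
    obtain ⟨Y, hYl, hYs, hYb⟩ := exists_chain Z hZinv hZ0 l
      (fun i => ι (lam i) * v ^ ((-1 : ℤ) ^ i))
      (fun i h1 h2 => mul_ne_zero (hι0 _ (hδ i h1).1) (hw0 i)) γ hγbig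
    obtain ⟨r, hrs, hrl, hrl1, hr01⟩ := hstart γ hγ
    have hratio := chain_ratio l x Y r
      (fun i h1 h2 => by rw [hYs i h1 h2, (hx i h1 h2).2])
      (fun i h1 h2 => ne_zero_of_big (hYb i h1 h2)) hrs
      (by rw [hYl, hrl, hrl1, mul_one]) (by rw [hrl1]; exact one_ne_zero) l le_rfl
    rw [Nat.add_sub_cancel_left, Nat.sub_self] at hratio
    have hβ1 : β 1 = Y 1 := by
      apply mul_right_cancel₀ hratio.1
      rw [hratio.2]
      exact mul_left_cancel₀ hden hr01
    have hun := cf_chain_unique 1 l (fun j hj => hβ j hj)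
      (fun i => C (ι (lam i) * v ^ ((-1 : ℤ) ^ i)) * A 0) Y
      (fun i h1 h2 => by rw [hYs i h1 h2, hpe, hA0]) hYb hβ1 l le_rfl
    refine ⟨fun j h1 h2 => ?_, ?_⟩
    · have h3 := hun.2 (j - 1) (by omega)
      rw [show 1 + (j - 1) = j by omega, show j - 1 + 1 = j by omega] at h3
      rw [h3, (hx j h1 h2).1]
    · rw [add_comm l 1, hun.1, hYl]; exact hγ
  -- the scalars of the `n`-th relation
  have hwp : ∀ n : ℕ, (v ^ ((-1 : ℤ) ^ n)) ^ p = s * v ^ ((-1 : ℤ) ^ n) := by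
    intro n
    rcases neg_one_pow_eq_or ℤ n with h | h
    · rw [h, zpow_one, hs]
    · rw [h, zpow_neg_one, inv_pow, hs, mul_inv]
      congr 1
      exact inv_eq_of_mul_eq_one_left (by rw [← sq]; exact hs2)
  let f : ℕ → ℕ := fun n => (2 * k + 1) * n + l - 2 * k
  have hf : ∀ n, 1 ≤ n → f (n + 1) = f n + (2 * k + 1) ∧ n + l ≤ f n := by
    intro n hn
    have h1 : (2 * k + 1) * n = 2 * k * n + n := by ring
    have h2 : 2 * k ≤ 2 * k * n := Nat.le_mul_of_pos_right _ (by omega)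
    have h3 : (2 * k + 1) * (n + 1) = (2 * k + 1) * n + (2 * k + 1) := by ring
    simp only [f]
    omega
  let w : ℕ → K := fun n => v ^ ((-1 : ℤ) ^ n)
  have hws : ∀ n, w (n + 1) = (w n)⁻¹ := fun n => neg_one_zpow_exp_succ v n
  let e : ℕ → K := fun n => ι (ε₁ ^ ((-1 : ℤ) ^ n))
  have he0 : ∀ n, e n ≠ 0 := fun n => hι0 _ (zpow_ne_zero _ hε₁)
  have hes : ∀ n, e (n + 1) = (e n)⁻¹ := fun n => by
    simp only [e, neg_one_zpow_exp_succ, map_inv₀]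
  let E' : ℕ → K := fun n => s * w n * (e n * w (f n))⁻¹
  let c' : ℕ → K := fun n => -(s * w n * ι (-(κ * θ)) * (ι (δ (n - 1)))⁻¹)
  let D' : ℕ → K := fun n => s * w n * ι (-(κ * θ)) * ι (δ n)
  have hc00 : ι (-(κ * θ)) ≠ 0 := hι0 _ (neg_ne_zero.2 (mul_ne_zero hκ hθ))
  have hwadd : ∀ m i : ℕ, w (m + i) = (w m) ^ ((-1 : ℤ) ^ i) := fun m i => by
    simp only [w]; rw [pow_add, zpow_mul]
  have hmain : ∀ n, 1 ≤ n →
      β n ^ p = HahnSeries.C (E' n) * P * β (f n) + HahnSeries.C (c' n) * Q ∧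
      ∀ j, 1 ≤ j → j < f n → a j = C (ι (lam j) * w j) * A (idx j) := by
    intro n hn
    induction n, hn using Nat.le_induction with
    | base =>
      have hf1 : f 1 = l + 1 := by simp only [f]; omega
      refine ⟨?_, fun j h1 h2 => hinit.1 j h1 (by omega)⟩
      have h1 : E' 1 = E := by
        simp only [E', hf1, w, e]
        rw [hE, mul_inv, pow_one, zpow_neg_one, zpow_neg_one, map_inv₀, inv_inv]
        ring
      have h2 : c' 1 = c := by
        simp only [c', w, Nat.sub_self, hδ0, hc, pow_one, zpow_neg_one]
        have h3 := hι0 _ hκ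
        have h4 := hι0 _ hθ
        simp only [map_neg, map_mul, map_div₀, inv_div]
        field_simp
      rw [h1, h2, hf1]
      exact hinit.2
    | succ n hn ih =>
      obtain ⟨hR, hprev⟩ := ih
      obtain ⟨hfs, hfn⟩ := hf n hn
      have hfs1 := hf (n + 1) (by omega)
      obtain ⟨hln, hdn, hdeq⟩ := hδ n hn
      have hwn : w n ≠ 0 := hw0 n
      have hwf : w (f n) ≠ 0 := hw0 _
      have hen := he0 n
      have hιδ := hι0 _ hdn
      have hstep := propagate p k hpk a β hβ Z P Q hZinv hZ0 hP0 hPv hQv A hA0 (ι θ)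
        (ι (-(κ * θ))) hApow (fun i => ι (vs i)) (fun i h1 h2 => hι0 _ (hvs i h1 h2))
        (fun Y => by
          obtain ⟨r, h1, h2, h3, h4, h5⟩ := hcore hP0 Y
          exact ⟨r, h1, h2, h3, by rw [h4]; simp, h5⟩)
        n (f n) (idx n) hn (by omega) (ι (lam n) * w n) (ι (lam (f n)) * w (f n)) (E' n)
        (E' (n + 1)) (c' n) (c' (n + 1)) (D' n) (fun i => ι (lam (f n + i)) * w (f n + i))
        (by
          have hwf2 : w (f (n + 1)) = (w (f n))⁻¹ := by
            rw [hfs, hwadd, pow_succ, pow_mul]; simp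
          simp only [E', hwf2, hws, hes]
          field_simp
          exact hs2)
        (mul_ne_zero (mul_ne_zero (mul_ne_zero hs0 hwn) hc00) hιδ)
        (by
          have h1 : ι (lam (f n)) = e n * ι (lam n) := by
            simp only [f, e]; rw [(hlamrec n hn).1, map_mul]
          have h2 : ι (lam n) ^ p = ι (lam n) := by rw [← map_pow, ZMod.pow_card]
          rw [mul_pow, h2, h1, show w n ^ p = s * w n from hwp n]
          simp only [E']
          field_simp)
        (by
          have h2 : ι (lam n) ^ p = ι (lam n) := by rw [← map_pow, ZMod.pow_card]
          rw [mul_pow, h2, show w n ^ p = s * w n from hwp n]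
          simp only [c', D']
          have h3 : ι (δ n) = ι θ ^ idx n * ι (lam n) + (ι (δ (n - 1)))⁻¹ := by
            rw [← map_pow, ← map_mul, ← map_inv₀, ← map_add, ← hdeq]
          rw [h3]
          ring)
        (by
          simp only [c', D', hws, Nat.add_sub_cancel]
          field_simp
          rw [hs2])
        (fun i h1 h2 => by
          have h3 := (hlamrec n hn).2 i h1 h2
          have h4 : D' n / E' n = e n * ι (-(κ * θ)) * ι (δ n) * w (f n) := by
            simp only [D', E']
            field_simp
          change ι (lam ((2 * k + 1) * n + l - 2 * k + i)) * w (f n + i) = _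
          rw [h3, h4, hwadd, pow_add, zpow_mul]
          have h5 : ι (-vs i * (ε₁ ^ (-1 : ℤ) ^ n) ^ (-1 : ℤ) ^ i
              * (κ * θ * δ n) ^ (-1 : ℤ) ^ i)
              = -ι (vs i) * e n ^ (-1 : ℤ) ^ i * (ι κ * ι θ * ι (δ n)) ^ (-1 : ℤ) ^ i := by
            simp only [e, map_mul, map_neg, map_zpow₀]
          rw [h5]
          have h6 : e n * ι (-(κ * θ)) * ι (δ n) * w (f n)
              = -(e n * (ι κ * ι θ * ι (δ n)) * w (f n)) := by
            simp only [map_mul, map_neg]; ring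
          rw [h6]
          rcases neg_one_pow_eq_or ℤ i with h | h
          · rw [h]; simp only [zpow_one]; ring
          · rw [h]; simp only [zpow_neg_one, mul_inv, inv_neg]; ring)
        hR (hprev n hn (by omega))
      obtain ⟨h1, h2, h3⟩ := hstep
      refine ⟨by rw [hfs]; exact h3, fun j hj1 hj2 => ?_⟩
      rcases lt_trichotomy j (f n) with h | h | h
      · exact hprev j hj1 h
      · rw [h, h1, show idx (f n) = idx n + 1 from hidx1 n hn]
      · obtain ⟨i, rfl⟩ : ∃ i, j = f n + i := ⟨j - f n, by omega⟩
        rw [h2 i (by omega) (by omega),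
          show idx (f n + i) = 0 from hidx0 n hn i (by omega) (by omega)]
  intro n hn
  exact ⟨(hδ n hn).1, (hmain n hn).2 n hn (by have := (hf n hn).2; omega)⟩

end Assembly

/-! ### Reduction to numerical data -/

lemma fcf_cons {F : Type} [DivisionRing F] (c : F) (t : List F) (ht : t ≠ []) :
    fcf (c :: t) = c + (fcf t)⁻¹ := by
  cases t with
  | nil => exact absurd rfl ht
  | cons d t => rfl

lemma fcf_range_succ {F : Type} [DivisionRing F] (g : ℕ → F) (z : F) (n : ℕ) :
    fcf (((List.range (n + 1)).map fun j => g (n + 1 - j)) ++ [z])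
      = g (n + 1) + (fcf (((List.range n).map fun j => g (n - j)) ++ [z]))⁻¹ := by
  rw [List.range_succ_eq_map, List.map_cons, List.cons_append, fcf_cons _ _ (by simp),
    List.map_map]
  congr 5
  funext j
  simp

/-- The theorem, reduced to finitely many numerical facts about `p`, `k`, `l` and to the first
hyperquadratic relation for `α = β 1`. -/
lemma reduction {p : ℕ} [Fact p.Prime] {K : Type} [Field K] [Algebra (ZMod p) K] [CharP K p]
    (k l : ℕ) (hpk : 2 * k < p) (hk : 1 ≤ k) (hl : 1 ≤ l) (idx : ℕ → ℕ)
    (hidx1 : ∀ n, 1 ≤ n → idx ((2 * k + 1) * n + l - 2 * k) = idx n + 1)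
    (hidx0 : ∀ n, 1 ≤ n → ∀ i, 1 ≤ i → i ≤ 2 * k →
      idx ((2 * k + 1) * n + l - 2 * k + i) = 0)
    (hidxl : ∀ n, 1 ≤ n → n ≤ l → idx n = 0)
    (v s : K) (hv0 : v ≠ 0) (hs : v ^ p = s * v) (hs2 : s ^ 2 = 1)
    (a : ℕ → K[X]) (α : LaurentSeries K) (β : ℕ → LaurentSeries K) (hcf : IsCFOf α a β)
    (ε₁ ε₂ : ZMod p) (hε₁ : ε₁ ≠ 0) (hε₂ : ε₂ ≠ 0)
    (hθ : theta (ZMod p) k ≠ 0) (hκ : (2 * k : ZMod p) ≠ 0)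
    (lam δ : ℕ → ZMod p)
    (hvs : ∀ i, 1 ≤ i → i ≤ 2 * k → vseq (ZMod p) k i ≠ 0)
    (ρ : ℕ → ZMod p)
    (hρ : ρ = fun i : ℕ => (i : ZMod p) * vseq (ZMod p) k i / (2 * (k : ZMod p) - 2 * i + 1))
    (hρ0 : ∀ i, 1 ≤ i → i ≤ 2 * k → ρ i ≠ 0)
    (hρ1 : ρ 1 = -vseq (ZMod p) k 1 + 2 * k)
    (hρs : ∀ i, 1 ≤ i → i < 2 * k → ρ (i + 1) = -vseq (ZMod p) k (i + 1) + (ρ i)⁻¹)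
    (hρl : ρ (2 * k) * (2 * k * theta (ZMod p) k) * theta (ZMod p) k = 1)
    (hδdef : ∀ n, 1 ≤ n → n ≤ l →
      δ n = fcf (((List.range n).map fun j => theta (ZMod p) k ^ idx (n - j) * lam (n - j)) ++
        [2 * k * theta (ZMod p) k / ε₂]))
    (hlamrec : ∀ n, 1 ≤ n →
      lam ((2 * k + 1) * n + l - 2 * k) = ε₁ ^ ((-1 : ℤ) ^ n) * lam n ∧
      ∀ i, 1 ≤ i → i ≤ 2 * k →
        lam ((2 * k + 1) * n + l - 2 * k + i)
          = -vseq (ZMod p) k i * ε₁ ^ ((-1 : ℤ) ^ (n + i)) *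
              (2 * k * theta (ZMod p) k * δ n) ^ ((-1 : ℤ) ^ i))
    (hδrec : ∀ n, 1 ≤ n →
      δ ((2 * k + 1) * n + l - 2 * k) = ε₁ ^ ((-1 : ℤ) ^ n) * δ n * theta (ZMod p) k ∧
      ∀ i, 1 ≤ i → i ≤ 2 * k →
        δ ((2 * k + 1) * n + l - 2 * k + i)
          = ε₁ ^ ((-1 : ℤ) ^ (n + i)) *
              ((i : ZMod p) * vseq (ZMod p) k i / (2 * (k : ZMod p) - 2 * i + 1)) *
              (2 * k * theta (ZMod p) k * δ n) ^ ((-1 : ℤ) ^ i))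
    -- the values of `δ_0, …, δ_l`
    (d : ℕ → ZMod p) (hd0 : d 0 = 2 * k * theta (ZMod p) k / ε₂)
    (hds : ∀ n, n < l → lam (n + 1) ≠ 0 ∧ d (n + 1) ≠ 0 ∧ d (n + 1) = lam (n + 1) + (d n)⁻¹)
    (hdl : d l = 2 * k * ε₁ / ε₂)
    (A1 G1 q : (ZMod p)[X]) (hX : X ^ p = Pk k * A1 + C (-(2 * k * theta (ZMod p) k)) * q)
    (hA1 : A1 = C (theta (ZMod p) k) * X + (X ^ 2 - 1) * G1) (hq : q.degree < (2 * k : ℕ))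
    (Z : LaurentSeries K) (hZ : Z = HahnSeries.C v⁻¹ * Tval K)
    (hcore : (Z ^ 2 - 1) ^ k ≠ 0 → ∀ Y, ∃ r : ℕ → LaurentSeries K,
      r 0 = (Z ^ 2 - 1) ^ k * Y ∧ r 1 = evZ Z q * Y + 1 ∧
      (∀ i, 1 ≤ i → i ≤ 2 * k →
        r (i - 1) = HahnSeries.C (algebraMap (ZMod p) K (vseq (ZMod p) k i)) * Z * r i
          + r (i + 1)) ∧
      r (2 * k) * (Z ^ 2 - 1) ^ k = r (2 * k + 1) * (Y +
        HahnSeries.C (algebraMap (ZMod p) K (2 * k * theta (ZMod p) k) ^ 2) * evZ Z q) ∧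
      r (2 * k + 1) ≠ 0)
    (x : ℕ → LaurentSeries K) (hx : ∀ i, 1 ≤ i → i ≤ l →
      x i = HahnSeries.C (algebraMap (ZMod p) K (lam i) * v ^ ((-1 : ℤ) ^ i)) * Z)
    (E c : K) (hE : E = s * v⁻¹ * algebraMap (ZMod p) K ε₁ * (v ^ ((-1 : ℤ) ^ (l + 1)))⁻¹)
    (hc : c = s * v⁻¹ * algebraMap (ZMod p) K ε₂)
    (hstart : ∀ γ, α ^ p = HahnSeries.C E * (Z ^ 2 - 1) ^ k * γ + HahnSeries.C c * evZ Z q →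
      ∃ r : ℕ → LaurentSeries K, (∀ i, 1 ≤ i → i ≤ l → r (i - 1) = x i * r i + r (i + 1)) ∧
        r l = γ ∧ r (l + 1) = 1 ∧
        HahnSeries.C E * (Z ^ 2 - 1) ^ k * (α * r 1) = HahnSeries.C E * (Z ^ 2 - 1) ^ k * r 0) :
    ∀ n, 1 ≤ n → lam n ≠ 0 ∧
      a n = C (algebraMap (ZMod p) K (lam n) * v ^ ((-1 : ℤ) ^ n)) *
        ((Aseq (ZMod p) p k (idx n)).map (algebraMap (ZMod p) K)).comp (C v⁻¹ * X) := by
  set θ := theta (ZMod p) k with hθdef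
  -- `δ` is only prescribed at positive indices
  set δ' : ℕ → ZMod p := Function.update δ 0 (2 * k * θ / ε₂) with hδ'
  have hδ'0 : δ' 0 = 2 * k * θ / ε₂ := by simp [hδ']
  have hδ'pos : ∀ n, 1 ≤ n → δ' n = δ n := fun n hn => by
    rw [hδ', Function.update_of_ne (by omega)]
  have hfpos : ∀ n i, 1 ≤ n → 1 ≤ (2 * k + 1) * n + l - 2 * k + i := by
    intro n i hn
    have h1 : (2 * k + 1) * n = 2 * k * n + n := by ring
    have h2 : 2 * k ≤ 2 * k * n := Nat.le_mul_of_pos_right _ (by omega)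
    omega
  have hlamrec' : ∀ n, 1 ≤ n →
      lam ((2 * k + 1) * n + l - 2 * k) = ε₁ ^ ((-1 : ℤ) ^ n) * lam n ∧
      ∀ i, 1 ≤ i → i ≤ 2 * k →
        lam ((2 * k + 1) * n + l - 2 * k + i)
          = -vseq (ZMod p) k i * ε₁ ^ ((-1 : ℤ) ^ (n + i)) *
              (2 * k * θ * δ' n) ^ ((-1 : ℤ) ^ i) := by
    intro n hn
    rw [hδ'pos n hn]
    exact hlamrec n hn
  have hδd : ∀ n, n ≤ l →
      d n = fcf (((List.range n).map fun j => θ ^ idx (n - j) * lam (n - j)) ++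
        [2 * k * θ / ε₂]) := by
    intro n
    induction n with
    | zero => intro _; simpa [fcf] using hd0
    | succ n ih =>
      intro hn
      rw [fcf_range_succ (fun j => θ ^ idx j * lam j), ← ih (by omega), (hds n (by omega)).2.2,
        hidxl (n + 1) (by omega) hn, pow_zero, one_mul]
  have hδ'd : ∀ n, n ≤ l → δ' n = d n := by
    intro n hn
    rcases Nat.eq_zero_or_pos n with rfl | h
    · rw [hδ'0, hd0]
    · rw [hδ'pos n h, hδdef n h hn, hδd n hn]
  have hδall := delta_step k l idx hidx1 hidx0 hk hl ε₁ ε₂ θ (2 * k) hε₁ hε₂ hθ hκ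
    (vseq (ZMod p) k) ρ lam δ' hvs hρ0 hρ1 hρs hρl hlamrec'
    (by
      intro n hn
      refine ⟨?_, fun i h1 h2 => ?_⟩
      · rw [hδ'pos n hn, hδ'pos ((2 * k + 1) * n + l - 2 * k) (hfpos n 0 hn)]; exact (hδrec n hn).1
      · rw [hδ'pos n hn, hδ'pos _ (hfpos n i hn), hρ]; exact (hδrec n hn).2 i h1 h2)
    hδ'0 (by rw [hδ'd l le_rfl, hdl])
    (by
      intro n h1 h2
      obtain ⟨t, rfl⟩ : ∃ t, n = t + 1 := ⟨n - 1, by omega⟩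
      rw [Nat.add_sub_cancel, hδ'd _ h2, hδ'd t (by omega), hidxl _ h1 h2, pow_zero, one_mul]
      exact hds t (by omega))
  exact assemble k l hpk hk hl idx hidx1 hidx0 v s hv0 hs hs2 a β
    (fun n hn => ⟨not_VG_of_adeg (hcf.2 n hn).2.1, (hcf.2 n hn).2.2⟩)
    ε₁ ε₂ θ (2 * k) hε₁ hθ hκ (vseq (ZMod p) k) lam δ' hvs hδ'0 hδall hlamrec' A1 G1 q hX hA1 hq
    Z hZ hcore x (fun i h1 h2 => ⟨hidxl i h1 h2, hx i h1 h2⟩) E c hE hc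
    (by rw [hcf.1]; exact hstart)

/-! ### Numerical data for `p = 7` and `p = 13` -/

lemma seven_eq {F : Type} [Field F] [CharP F 7] : (7 : F) = 0 := by
  exact_mod_cast CharP.cast_eq_zero F 7

lemma thirteen_eq {F : Type} [Field F] [CharP F 13] : (13 : F) = 0 := by
  exact_mod_cast CharP.cast_eq_zero F 13

/-- One step of the recursion for `v_{i,k}`; `z` is the inverse of `i (2k - i) v_{i,k}`. -/
lemma vseq_step {F : Type} [Field F] (k i : ℕ) (x y z : F) (hx : vseq F k (i + 1) = x)
    (hz : (((i + 1 : ℕ) : F) * (2 * k - (i + 1 : ℕ))) * x * z = 1)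
    (hy : (((2 * (k : ℤ) - 2 * (i + 1 : ℕ) - 1) * (2 * (k : ℤ) - 2 * (i + 1 : ℕ) + 1) : ℤ) : F)
      * z = y) : vseq F k (i + 2) = y := by
  rw [vseq, hx, mul_assoc, ← mul_inv, inv_eq_of_mul_eq_one_right hz, hy]
  intro h
  omega

lemma theta_seven [Fact (Nat.Prime 7)] : theta (ZMod 7) 2 = 3 := by
  have i2 : (2 * (1 : ℕ) : ZMod 7)⁻¹ = 4 := inv_eq_of_mul_eq_one_right (by rfl)
  have i4 : (2 * (2 : ℕ) : ZMod 7)⁻¹ = 2 := inv_eq_of_mul_eq_one_right (by rfl)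
  have e : Finset.Icc 1 2 = {1, 2} := rfl
  rw [theta, e]
  rw [Finset.prod_insert (by decide)]
  rw [Finset.prod_singleton, i2, i4]
  ring

lemma vseq_seven [Fact (Nat.Prime 7)] :
    vseq (ZMod 7) 2 1 = 3 ∧ vseq (ZMod 7) 2 2 = 5 ∧ vseq (ZMod 7) 2 3 = 1 ∧
      vseq (ZMod 7) 2 4 = 1 := by
  have h1 : vseq (ZMod 7) 2 1 = 3 := by
    simp only [vseq]
    rfl
  have h2 := vseq_step (F := ZMod 7) 2 0 3 5 4 h1 rfl rfl
  have h3 := vseq_step (F := ZMod 7) 2 1 5 1 6 h2 rfl rfl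
  have h4 := vseq_step (F := ZMod 7) 2 2 1 1 5 h3 rfl rfl
  exact ⟨h1, h2, h3, h4⟩

/-- The Euclidean algorithm for `P_k(Z) Y` and `Q_k(Z) Y + 1` when `p = 7`, `k = 2`, with quotients
`v_{i,k} Z` and with the remainders written out modulo `7`. -/
lemma core_seven {F : Type} [Field F] (hp : (7 : F) = 0) (Z : F) (hP : (Z ^ 2 - 1) ^ 2 ≠ 0)
    (w : ℕ → F) (hv1 : w 1 = 3) (hv2 : w 2 = 5) (hv3 : w 3 = 1) (hv4 : w 4 = 1)
    (c : F) (hkt : c = 4) (Y : F) :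
    ∃ r : ℕ → F, r 0 = (Z ^ 2 - 1) ^ 2 * Y ∧ r 1 = (5 * Z ^ 3 - Z) * Y + 1 ∧
      (∀ i, 1 ≤ i → i ≤ 4 → r (i - 1) = w i * Z * r i + r (i + 1)) ∧
      r 4 * (Z ^ 2 - 1) ^ 2 = r 5 * (Y + c * (5 * Z ^ 3 - Z)) ∧ r 5 ≠ 0 := by
  refine ⟨fun i => [Z ^ 4 * Y - 2 * Z ^ 2 * Y + Y,
    -2 * Z ^ 3 * Y - Z * Y + 1,
    Z ^ 2 * Y - 3 * Z + Y,
    Z ^ 2 + Z * Y + 1,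
    -Z ^ 3 + 3 * Z + Y,
    Z ^ 4 - 2 * Z ^ 2 + 1].getD i 0, ?_, ?_, ?_, ?_, ?_⟩
  · simp only [List.getD_cons_zero]
    ring
  · simp only [List.getD_cons_zero, List.getD_cons_succ]
    linear_combination (-Z ^ 3 * Y) * hp
  · intro i h1 h2
    interval_cases i
    · rw [hv1]
      simp only [Nat.reduceAdd, Nat.reduceSub, List.getD_cons_zero, List.getD_cons_succ]
      linear_combination (Z ^ 4 * Y) * hp
    · rw [hv2]
      simp only [Nat.reduceAdd, Nat.reduceSub, List.getD_cons_zero, List.getD_cons_succ]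
      linear_combination (-Z ^ 3 * Y + 2 * Z ^ 2 - Z * Y) * hp
    · rw [hv3]
      simp only [Nat.reduceAdd, Nat.reduceSub, List.getD_cons_zero, List.getD_cons_succ]
      linear_combination (-Z) * hp
    · rw [hv4]
      simp only [Nat.reduceAdd, Nat.reduceSub, List.getD_cons_zero, List.getD_cons_succ]
      ring
  · simp only [List.getD_cons_zero, List.getD_cons_succ]
    rw [hkt]
    linear_combination (-3 * Z ^ 7 + 7 * Z ^ 5 - 5 * Z ^ 3 + Z) * hp
  · simp only [List.getD_cons_zero, List.getD_cons_succ]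
    intro h0
    refine hP ?_
    linear_combination h0

/-- If `α` satisfies the quartic equation and `γ` is defined by the first hyperquadratic relation,
then `α` is the value of the chain of the first `l` partial quotients followed by `γ`. -/
lemma start_seven {F : Type} [Field F] (hp : (7 : F) = 0) (α T γ : F)
    (hq : α ^ 4 - 2 * T * α ^ 3 + 2 * α ^ 2 + 2 = 0)
    (hγ : α ^ 7 = 3 * (T ^ 2 - 1) ^ 2 * γ + 5 * (5 * T ^ 3 - T)) :
    ∃ r : ℕ → F, (∀ i, 1 ≤ i → i ≤ 3 →
        r (i - 1) = [0, 2 * T, -T, -T].getD i 0 * r i + r (i + 1)) ∧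
      r 3 = γ ∧ r 4 = 1 ∧ 3 * (T ^ 2 - 1) ^ 2 * (α * r 1) = 3 * (T ^ 2 - 1) ^ 2 * r 0 := by
  obtain ⟨r2, h2⟩ : ∃ y, y = -T * γ + 1 := ⟨_, rfl⟩
  obtain ⟨r1, h1⟩ : ∃ y, y = -T * r2 + γ := ⟨_, rfl⟩
  obtain ⟨r0, h0⟩ : ∃ y, y = 2 * T * r1 + r2 := ⟨_, rfl⟩
  refine ⟨fun i => [r0, r1, r2, γ, 1].getD i 0, ?_, rfl, rfl, ?_⟩
  · intro i hi1 hi2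
    interval_cases i
    · exact h0
    · exact h1
    · exact h2
  · simp only [List.getD_cons_zero, List.getD_cons_succ]
    subst h0 h1 h2
    linear_combination (-(α * (T ^ 2 + 1) - (2 * T ^ 3 + T))) * hγ
      + (α ^ 4 * T ^ 2 + α ^ 4 + α ^ 3 * T - 2 * α ^ 2 + α * T + 2) * hq
      + (-α ^ 5 * T - 4 * α * T ^ 5 - 2 * α * T ^ 3 + 8 * T ^ 6 + T ^ 2 - 1) * hp

lemma theta_thirteen [Fact (Nat.Prime 13)] : theta (ZMod 13) 4 = 2 := by
  have i2 : (2 * (1 : ℕ) : ZMod 13)⁻¹ = 7 := inv_eq_of_mul_eq_one_right (by rfl)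
  have i4 : (2 * (2 : ℕ) : ZMod 13)⁻¹ = 10 := inv_eq_of_mul_eq_one_right (by rfl)
  have i6 : (2 * (3 : ℕ) : ZMod 13)⁻¹ = 11 := inv_eq_of_mul_eq_one_right (by rfl)
  have i8 : (2 * (4 : ℕ) : ZMod 13)⁻¹ = 5 := inv_eq_of_mul_eq_one_right (by rfl)
  have e : Finset.Icc 1 4 = {1, 2, 3, 4} := rfl
  rw [theta, e]
  rw [Finset.prod_insert (by decide)]
  rw [Finset.prod_insert (by decide)]
  rw [Finset.prod_insert (by decide)]
  rw [Finset.prod_singleton, i2, i4, i6, i8]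
  linear_combination 166 * thirteen_eq (F := ZMod 13)

lemma vseq_thirteen [Fact (Nat.Prime 13)] :
    vseq (ZMod 13) 4 1 = 7 ∧ vseq (ZMod 13) 4 2 = 10 ∧ vseq (ZMod 13) 4 3 = 5 ∧
      vseq (ZMod 13) 4 4 = 12 ∧ vseq (ZMod 13) 4 5 = 9 ∧ vseq (ZMod 13) 4 6 = 11 ∧
      vseq (ZMod 13) 4 7 = 1 ∧ vseq (ZMod 13) 4 8 = 5 := by
  have h1 : vseq (ZMod 13) 4 1 = 7 := by
    simp only [vseq]
    rfl
  have h2 := vseq_step (F := ZMod 13) 4 0 7 10 4 h1 rfl rfl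
  have h3 := vseq_step (F := ZMod 13) 4 1 10 5 9 h2 rfl rfl
  have h4 := vseq_step (F := ZMod 13) 4 2 5 12 4 h3 rfl rfl
  have h5 := vseq_step (F := ZMod 13) 4 3 12 9 4 h4 rfl rfl
  have h6 := vseq_step (F := ZMod 13) 4 4 9 11 8 h5 rfl rfl
  have h7 := vseq_step (F := ZMod 13) 4 5 11 1 7 h6 rfl rfl
  have h8 := vseq_step (F := ZMod 13) 4 6 1 5 2 h7 rfl rfl
  exact ⟨h1, h2, h3, h4, h5, h6, h7, h8⟩

/-- The Euclidean algorithm for `P_k(Z) Y` and `Q_k(Z) Y + 1` when `p = 13`, `k = 4`, with quotients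
`v_{i,k} Z` and with the remainders written out modulo `13`. -/
lemma core_thirteen {F : Type} [Field F] (hp : (13 : F) = 0) (Z : F) (hP : (Z ^ 2 - 1) ^ 4 ≠ 0)
    (w : ℕ → F) (hv1 : w 1 = 7) (hv2 : w 2 = 10) (hv3 : w 3 = 5) (hv4 : w 4 = 12)
    (hv5 : w 5 = 9) (hv6 : w 6 = 11) (hv7 : w 7 = 1) (hv8 : w 8 = 5)
    (c : F) (hkt : c = 9) (Y : F) :
    ∃ r : ℕ → F, r 0 = (Z ^ 2 - 1) ^ 4 * Y ∧ r 1 = (2 * Z ^ 7 + 2 * Z ^ 5 + Z ^ 3 - Z) * Y + 1 ∧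
      (∀ i, 1 ≤ i → i ≤ 8 → r (i - 1) = w i * Z * r i + r (i + 1)) ∧
      r 8 * (Z ^ 2 - 1) ^ 4 = r 9 * (Y + c * (2 * Z ^ 7 + 2 * Z ^ 5 + Z ^ 3 - Z)) ∧ r 9 ≠ 0 := by
  refine ⟨fun i => [Z ^ 8 * Y - 4 * Z ^ 6 * Y + 6 * Z ^ 4 * Y - 4 * Z ^ 2 * Y + Y,
    2 * Z ^ 7 * Y + 2 * Z ^ 5 * Y + Z ^ 3 * Y - Z * Y + 1,
    -5 * Z ^ 6 * Y - Z ^ 4 * Y + 3 * Z ^ 2 * Y + 6 * Z + Y,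
    -Z ^ 5 * Y - 3 * Z ^ 3 * Y + 5 * Z ^ 2 + 2 * Z * Y + 1,
    Z ^ 4 * Y + Z ^ 3 + 6 * Z ^ 2 * Y + Z + Y,
    Z ^ 4 + 3 * Z ^ 3 * Y + 6 * Z ^ 2 + 3 * Z * Y + 1,
    4 * Z ^ 5 - Z ^ 3 + 5 * Z ^ 2 * Y + 5 * Z + Y,
    -5 * Z ^ 6 - Z ^ 4 + 3 * Z ^ 2 + 5 * Z * Y + 1,
    5 * Z ^ 7 + 5 * Z ^ 5 - 4 * Z ^ 3 + 4 * Z + Y,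
    Z ^ 8 - 4 * Z ^ 6 + 6 * Z ^ 4 - 4 * Z ^ 2 + 1].getD i 0, ?_, ?_, ?_, ?_, ?_⟩
  · simp only [List.getD_cons_zero]
    ring
  · simp only [List.getD_cons_zero, List.getD_cons_succ]
    ring
  · intro i h1 h2
    interval_cases i
    · rw [hv1]
      simp only [Nat.reduceAdd, Nat.reduceSub, List.getD_cons_zero, List.getD_cons_succ]
      linear_combination (-Z ^ 8 * Y - Z ^ 6 * Y - Z) * hp
    · rw [hv2]
      simp only [Nat.reduceAdd, Nat.reduceSub, List.getD_cons_zero, List.getD_cons_succ]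
      linear_combination (4 * Z ^ 7 * Y + Z ^ 5 * Y - 2 * Z ^ 3 * Y - 5 * Z ^ 2 - Z * Y) * hp
    · rw [hv3]
      simp only [Nat.reduceAdd, Nat.reduceSub, List.getD_cons_zero, List.getD_cons_succ]
      linear_combination (Z ^ 4 * Y - 2 * Z ^ 3 - Z ^ 2 * Y) * hp
    · rw [hv4]
      simp only [Nat.reduceAdd, Nat.reduceSub, List.getD_cons_zero, List.getD_cons_succ]
      linear_combination (-Z ^ 5 * Y - Z ^ 4 - 6 * Z ^ 3 * Y - Z ^ 2 - Z * Y) * hp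
    · rw [hv5]
      simp only [Nat.reduceAdd, Nat.reduceSub, List.getD_cons_zero, List.getD_cons_succ]
      linear_combination (-Z ^ 5 - 2 * Z ^ 4 * Y - 4 * Z ^ 3 - 2 * Z ^ 2 * Y - Z) * hp
    · rw [hv6]
      simp only [Nat.reduceAdd, Nat.reduceSub, List.getD_cons_zero, List.getD_cons_succ]
      linear_combination (-3 * Z ^ 6 + Z ^ 4 - 4 * Z ^ 3 * Y - 4 * Z ^ 2 - Z * Y) * hp
    · rw [hv7]
      simp only [Nat.reduceAdd, Nat.reduceSub, List.getD_cons_zero, List.getD_cons_succ]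
      ring
    · rw [hv8]
      simp only [Nat.reduceAdd, Nat.reduceSub, List.getD_cons_zero, List.getD_cons_succ]
      linear_combination (-2 * Z ^ 8 - 2 * Z ^ 6 + Z ^ 4 - Z ^ 2) * hp
  · simp only [List.getD_cons_zero, List.getD_cons_succ]
    rw [hkt]
    linear_combination (-Z ^ 15 + 3 * Z ^ 13 - 3 * Z ^ 11 + 3 * Z ^ 9 - 7 * Z ^ 7 + 9 * Z ^ 5 - 5
      * Z ^ 3 + Z) * hp
  · simp only [List.getD_cons_zero, List.getD_cons_succ]
    intro h0
    refine hP ?_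
    linear_combination h0

/-- If `α` satisfies the quartic equation and `γ` is defined by the first hyperquadratic relation,
then `α` is the value of the chain of the first `l` partial quotients followed by `γ`. -/
lemma start_thirteen {F : Type} [Field F] (hp : (13 : F) = 0) (α T γ : F)
    (hq : α ^ 4 - T * α ^ 3 + α ^ 2 + 1 = 0)
    (hγ : α ^ 13 = (-5 * T ^ 2 - 1) ^ 4 * γ + 4 * (1250 * T ^ 7 - 250 * T ^ 5 + 25 * T ^ 3 + 5 *
      T)) :
    ∃ r : ℕ → F, (∀ i, 1 ≤ i → i ≤ 6 →
        r (i - 1) = [0, T, -T, -6 * T, -2 * T, -5 * T, 5 * T].getD i 0 * r i + r (i + 1)) ∧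
      r 6 = γ ∧ r 7 = 1 ∧ (-5 * T ^ 2 - 1) ^ 4 * (α * r 1) = (-5 * T ^ 2 - 1) ^ 4 * r 0 := by
  obtain ⟨r5, h5⟩ : ∃ y, y = 5 * T * γ + 1 := ⟨_, rfl⟩
  obtain ⟨r4, h4⟩ : ∃ y, y = -5 * T * r5 + γ := ⟨_, rfl⟩
  obtain ⟨r3, h3⟩ : ∃ y, y = -2 * T * r4 + r5 := ⟨_, rfl⟩
  obtain ⟨r2, h2⟩ : ∃ y, y = -6 * T * r3 + r4 := ⟨_, rfl⟩
  obtain ⟨r1, h1⟩ : ∃ y, y = -T * r2 + r3 := ⟨_, rfl⟩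
  obtain ⟨r0, h0⟩ : ∃ y, y = T * r1 + r2 := ⟨_, rfl⟩
  refine ⟨fun i => [r0, r1, r2, r3, r4, r5, γ, 1].getD i 0, ?_, rfl, rfl, ?_⟩
  · intro i hi1 hi2
    interval_cases i
    · exact h0
    · exact h1
    · exact h2
    · exact h3
    · exact h4
    · exact h5
  · simp only [List.getD_cons_zero, List.getD_cons_succ]
    subst h0 h1 h2 h3 h4 h5
    linear_combination (-(α * (300 * T ^ 5 + 93 * T ^ 3 + 2 * T) - (300 * T ^ 6 - 207 * T ^ 4 - 41
      * T ^ 2 + 1))) * hγ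
      + (α ^ 10 * T ^ 5 + 2 * α ^ 10 * T ^ 3 + 2 * α ^ 10 * T + α ^ 9 * T ^ 4 + 4 * α ^ 9 * T ^ 2
        - α ^ 9 + 2 * α ^ 8 * T ^ 3 - 3 * α ^ 8 * T +
        α ^ 7 * T ^ 4 + 6 * α ^ 7 * T ^ 2 + α ^ 7 + 2 * α ^ 6 * T ^ 3 + 2 * α ^ 6 * T + 5 * α ^ 5
          * T ^ 2 + α ^ 4 * T ^ 3 + α ^ 4 * T + 3 * α ^ 3 * T ^ 2
        - α ^ 3 - 4 * α ^ 2 * T + α * T ^ 2 + α + 4 * T) * hq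
      + (23 * α ^ 14 * T ^ 5 + 7 * α ^ 14 * T ^ 3 - 23 * α ^ 13 * T ^ 6 + 16 * α ^ 13 * T ^ 4 + 3
        * α ^ 13 * T ^ 2 - α ^ 11 * T ^ 2 - α ^ 9 * T ^ 2 -
        α ^ 7 * T ^ 2 - α ^ 5 * T ^ 2 - 112500 * α * T ^ 12 - 9375 * α * T ^ 10 + 5625 * α * T ^ 8
          - 650 * α * T ^ 6 - 110 * α * T ^ 4 +
        112500 * T ^ 13 - 103125 * T ^ 11 + 3750 * T ^ 9 + 3150 * T ^ 7 - 540 * T ^ 5 - 37 * T ^ 3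
          + 2 * T) * hp

/-- The value of `i v_{i,k} / (2k - 2i + 1)`, with `z` the inverse of the denominator. -/
lemma rho_val {F : Type} [Field F] (k i : ℕ) (x y z : F) (hx : vseq F k i = x)
    (hz : (2 * (k : F) - 2 * i + 1) * z = 1) (hy : (i : F) * x * z = y) :
    (i : F) * vseq F k i / (2 * (k : F) - 2 * i + 1) = y := by
  rw [hx, div_eq_mul_inv, inv_eq_of_mul_eq_one_right hz, hy]

lemma eq_add_inv {F : Type} [Field F] (x t y z w : F) (ht : t = y) (h : y * w = 1)
    (hx : x = z + w) : x = z + t⁻¹ := by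
  rw [ht, inv_eq_of_mul_eq_one_right h, hx]

lemma ne_zero_of_inv {F : Type} [Field F] (x y z : F) (hx : x = y) (h : y * z = 1) : x ≠ 0 := by
  rw [hx]
  exact left_ne_zero_of_mul_eq_one h

lemma seven_eq_laurent {K : Type} [Field K] [CharP K 7] : (7 : LaurentSeries K) = 0 := by
  rw [← map_ofNat (HahnSeries.C : K →+* LaurentSeries K), seven_eq, map_zero]

lemma seven_eq_poly : (7 : (ZMod 7)[X]) = 0 := by
  exact_mod_cast CharP.cast_eq_zero (ZMod 7)[X] 7

lemma idx_seven (idx : ℕ → ℕ)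
    (hidx : ∀ n, 1 ≤ n → idx n = largestPow ((2 * 7 + 1) / 3) ((7 - 1) * (4 * n - 1) / 6)) :
    (∀ n, 1 ≤ n → idx ((2 * 2 + 1) * n + 3 - 2 * 2) = idx n + 1) ∧
    (∀ n, 1 ≤ n → ∀ i, 1 ≤ i → i ≤ 2 * 2 → idx ((2 * 2 + 1) * n + 3 - 2 * 2 + i) = 0) ∧
    (∀ n, 1 ≤ n → n ≤ 3 → idx n = 0) := by
  have hidx' : ∀ n, 1 ≤ n → idx n = largestPow 5 (1 * (4 * n - 1)) := by
    intro n hn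
    rw [hidx n hn]
    congr 1
    omega
  refine ⟨fun n hn => ?_, fun n hn i h1 h2 => ?_, fun n h1 h2 => ?_⟩
  · rw [hidx' n hn, hidx' _ (by omega), ← largestPow_mul 5 _ (by norm_num) (by omega)]
    congr 1
    omega
  · rw [hidx' _ (by omega)]
    exact largestPow_eq_zero _ _ (by omega)
  · rw [hidx' n h1]
    exact largestPow_eq_zero _ _ (by omega)

/-- The case `p = 7`, for an arbitrary coefficient field of characteristic `7`. -/
lemma case_seven [Fact (Nat.Prime 7)] {K : Type} [Field K] [Algebra (ZMod 7) K] [CharP K 7]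
    (idx : ℕ → ℕ)
    (hidx : ∀ n, 1 ≤ n → idx n = largestPow ((2 * 7 + 1) / 3) ((7 - 1) * (4 * n - 1) / 6))
    (v : K) (hv : v = 1) (α : LaurentSeries K)
    (hα : -α ^ 4 / 12 - Tval K * α ^ 3 + α ^ 2 + 1 = 0)
    (a : ℕ → K[X]) (β : ℕ → LaurentSeries K) (hcf : IsCFOf α a β)
    (ε₁ ε₂ : ZMod 7) (lam δ : ℕ → ZMod 7) (hε₁ : ε₁ = 3) (hε₂ : ε₂ = 5)
    (hl1 : lam 1 = 2) (hl2 : lam 2 = 6) (hl3 : lam 3 = 6)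
    (hδdef : ∀ n, 1 ≤ n → n ≤ 3 →
      δ n = fcf (((List.range n).map fun j =>
        theta (ZMod 7) 2 ^ idx (n - j) * lam (n - j)) ++
          [2 * (2 : ℕ) * theta (ZMod 7) 2 / ε₂]))
    (hlamrec : ∀ n, 1 ≤ n →
      lam ((2 * 2 + 1) * n + 3 - 2 * 2) = ε₁ ^ ((-1 : ℤ) ^ n) * lam n ∧
      ∀ i, 1 ≤ i → i ≤ 2 * 2 →
        lam ((2 * 2 + 1) * n + 3 - 2 * 2 + i)
          = -vseq (ZMod 7) 2 i * ε₁ ^ ((-1 : ℤ) ^ (n + i)) *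
              (2 * (2 : ℕ) * theta (ZMod 7) 2 * δ n) ^ ((-1 : ℤ) ^ i))
    (hδrec : ∀ n, 1 ≤ n →
      δ ((2 * 2 + 1) * n + 3 - 2 * 2)
        = ε₁ ^ ((-1 : ℤ) ^ n) * δ n * theta (ZMod 7) 2 ∧
      ∀ i, 1 ≤ i → i ≤ 2 * 2 →
        δ ((2 * 2 + 1) * n + 3 - 2 * 2 + i)
          = ε₁ ^ ((-1 : ℤ) ^ (n + i)) *
              ((i : ZMod 7) * vseq (ZMod 7) 2 i / (2 * ((2 : ℕ) : ZMod 7) - 2 * i + 1)) *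
              (2 * (2 : ℕ) * theta (ZMod 7) 2 * δ n) ^ ((-1 : ℤ) ^ i)) :
    ∀ n, 1 ≤ n → lam n ≠ 0 ∧
      a n = C (algebraMap (ZMod 7) K (lam n) * v ^ ((-1 : ℤ) ^ n)) *
        ((Aseq (ZMod 7) 7 2 (idx n)).map (algebraMap (ZMod 7) K)).comp (C v⁻¹ * X) := by
  obtain ⟨hi1, hi0, hil⟩ := idx_seven idx hidx
  obtain ⟨w1, w2, w3, w4⟩ := vseq_seven
  have hθ := theta_seven
  have hκθ : (2 * (2 : ℕ) * theta (ZMod 7) 2 : ZMod 7) = 5 := by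
    rw [hθ]
    rfl
  have ρ1 := rho_val (F := ZMod 7) 2 1 3 1 5 w1 rfl rfl
  have ρ2 := rho_val (F := ZMod 7) 2 2 5 3 1 w2 rfl rfl
  have ρ3 := rho_val (F := ZMod 7) 2 3 1 4 6 w3 rfl rfl
  have ρ4 := rho_val (F := ZMod 7) 2 4 1 1 2 w4 rfl rfl
  have hpL : (7 : LaurentSeries K) = 0 := seven_eq_laurent
  have hpF : (7 : ZMod 7) = 0 := seven_eq
  have hpX : (7 : (ZMod 7)[X]) = 0 := seven_eq_poly
  have hevq : ∀ Z : LaurentSeries K, evZ Z (5 * X ^ 3 - X : (ZMod 7)[X]) = 5 * Z ^ 3 - Z := by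
    intro Z
    simp only [map_sub, map_mul, map_pow, evZ_X, map_ofNat]
  subst hv
  have hq : α ^ 4 - 2 * Tval K * α ^ 3 + 2 * α ^ 2 + 2 = 0 := by
    have h12 : (12 : LaurentSeries K)⁻¹ = 3 :=
      inv_eq_of_mul_eq_one_right (by linear_combination 5 * hpL)
    rw [div_eq_mul_inv, h12] at hα
    linear_combination 2 * hα + α ^ 4 * hpL
  have hZ : HahnSeries.C (1 : K)⁻¹ * Tval K = Tval K := by
    rw [inv_one, map_one, one_mul]
  refine reduction 2 3 (by norm_num) (by norm_num) (by norm_num) idx hi1 hi0 hil 1 1 one_ne_zero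
    (by norm_num)
    (by norm_num) a α β hcf ε₁ ε₂
    (ne_zero_of_inv _ _ 5 hε₁ rfl) (ne_zero_of_inv _ _ 3 hε₂ rfl)
    (ne_zero_of_inv _ _ 5 hθ rfl)
    (left_ne_zero_of_mul_eq_one (b := (2 : ZMod 7)) rfl) lam δ
    ?_ _ rfl ?_ ?_ ?_ ?_ hδdef hlamrec hδrec
    (fun n => [1, 3, 4, 1].getD n 0) ?_ ?_ ?_ (X ^ 3 + 2 * X) (X) (5 * X ^ 3 - X) ?_ ?_ ?_
    _ rfl ?_ (fun i => [0, 2 * Tval K, -Tval K, -Tval K].getD i 0) ?_ (3) (5) ?_ ?_ ?_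
  · intro i h1 h2
    interval_cases i
    · exact ne_zero_of_inv _ _ 5 w1 rfl
    · exact ne_zero_of_inv _ _ 3 w2 rfl
    · exact ne_zero_of_inv _ _ 1 w3 rfl
    · exact ne_zero_of_inv _ _ 1 w4 rfl
  · intro i h1 h2
    interval_cases i
    · exact ne_zero_of_inv _ _ 1 ρ1 rfl
    · exact ne_zero_of_inv _ _ 5 ρ2 rfl
    · exact ne_zero_of_inv _ _ 2 ρ3 rfl
    · exact ne_zero_of_inv _ _ 1 ρ4 rfl
  · rw [w1]
    refine ρ1.trans ?_
    push_cast
    linear_combination (0) * hpF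
  · intro i h1 h2
    interval_cases i
    · refine ρ2.trans ?_
      rw [w2]
      exact eq_add_inv _ _ 1 _ 1 ρ1 rfl
        (by linear_combination (1) * hpF)
    · refine ρ3.trans ?_
      rw [w3]
      exact eq_add_inv _ _ 3 _ 5 ρ2 rfl
        (by linear_combination (0) * hpF)
    · refine ρ4.trans ?_
      rw [w4]
      exact eq_add_inv _ _ 4 _ 2 ρ3 rfl
        (by linear_combination (0) * hpF)
  · rw [hκθ, hθ]
    exact (congrArg (fun z => z * 5 * 3) ρ4).trans rfl
  · rw [hκθ, hε₂, div_eq_mul_inv, inv_eq_of_mul_eq_one_right (b := (3 : ZMod 7)) rfl]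
    rfl
  · intro n hn
    interval_cases n
    · exact ⟨ne_zero_of_inv _ _ 4 hl1 rfl, ne_zero_of_inv _ 3 5 rfl rfl,
        eq_add_inv _ _ 1 _ 1 rfl rfl (by rw [hl1]; rfl)⟩
    · exact ⟨ne_zero_of_inv _ _ 6 hl2 rfl, ne_zero_of_inv _ 4 2 rfl rfl,
        eq_add_inv _ _ 3 _ 5 rfl rfl (by rw [hl2]; rfl)⟩
    · exact ⟨ne_zero_of_inv _ _ 6 hl3 rfl, ne_zero_of_inv _ 1 1 rfl rfl,
        eq_add_inv _ _ 4 _ 2 rfl rfl (by rw [hl3]; rfl)⟩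
  · rw [hε₁, hε₂, div_eq_mul_inv, inv_eq_of_mul_eq_one_right (b := (3 : ZMod 7)) rfl]
    rfl
  · have e : (C (-(2 * (2 : ℕ) * theta (ZMod 7) 2)) : (ZMod 7)[X]) = 2 := by
      rw [hκθ]
      exact congrArg C (show (-5 : ZMod 7) = 2 from rfl)
    rw [e, Pk]
    linear_combination (-X ^ 3) * hpX
  · rw [hθ]
    have e : (C (3 : ZMod 7) : (ZMod 7)[X]) = 3 := rfl
    rw [e]
    ring
  · exact lt_of_le_of_lt (b := ((3 : ℕ) : WithBot ℕ)) (by compute_degree!) (by norm_cast)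
  · intro hP Y
    rw [hevq]
    refine core_seven hpL _ hP
      (fun i => HahnSeries.C (algebraMap (ZMod 7) K (vseq (ZMod 7) 2 i)))
      ?_ ?_ ?_ ?_ _ ?_ Y
    · simp only [w1, map_ofNat]
    · simp only [w2, map_ofNat]
    · simp only [w3, map_one]
    · simp only [w4, map_one]
    · rw [hκθ, map_ofNat, map_pow, map_ofNat]
      linear_combination 3 * hpL
  · intro i h1 h2
    rw [hZ]
    interval_cases i
    · rw [hl1]
      simp only [List.getD_cons_zero, List.getD_cons_succ, one_zpow, mul_one, map_ofNat]
    · rw [hl2]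
      simp only [List.getD_cons_zero, List.getD_cons_succ, one_zpow, mul_one, map_ofNat]
      linear_combination (-Tval K) * hpL
    · rw [hl3]
      simp only [List.getD_cons_zero, List.getD_cons_succ, one_zpow, mul_one, map_ofNat]
      linear_combination (-Tval K) * hpL
  · rw [hε₁, map_ofNat]
    simp
  · rw [hε₂, map_ofNat]
    simp
  · intro γ hγ
    rw [hZ, hevq, map_ofNat, map_ofNat] at hγ
    rw [hZ, map_ofNat]
    exact start_seven hpL α (Tval K) γ hq hγ

lemma thirteen_eq_laurent {K : Type} [Field K] [CharP K 13] : (13 : LaurentSeries K) = 0 := by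
  rw [← map_ofNat (HahnSeries.C : K →+* LaurentSeries K), thirteen_eq, map_zero]

lemma thirteen_eq_poly : (13 : (ZMod 13)[X]) = 0 := by
  exact_mod_cast CharP.cast_eq_zero (ZMod 13)[X] 13

lemma idx_thirteen (idx : ℕ → ℕ)
    (hidx : ∀ n, 1 ≤ n → idx n = largestPow ((2 * 13 + 1) / 3) ((13 - 1) * (4 * n - 1) / 6)) :
    (∀ n, 1 ≤ n → idx ((2 * 4 + 1) * n + 6 - 2 * 4) = idx n + 1) ∧
    (∀ n, 1 ≤ n → ∀ i, 1 ≤ i → i ≤ 2 * 4 → idx ((2 * 4 + 1) * n + 6 - 2 * 4 + i) = 0) ∧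
    (∀ n, 1 ≤ n → n ≤ 6 → idx n = 0) := by
  have hidx' : ∀ n, 1 ≤ n → idx n = largestPow 9 (2 * (4 * n - 1)) := by
    intro n hn
    rw [hidx n hn]
    congr 1
    omega
  refine ⟨fun n hn => ?_, fun n hn i h1 h2 => ?_, fun n h1 h2 => ?_⟩
  · rw [hidx' n hn, hidx' _ (by omega), ← largestPow_mul 9 _ (by norm_num) (by omega)]
    congr 1
    omega
  · rw [hidx' _ (by omega)]
    exact largestPow_eq_zero _ _ (by omega)
  · rw [hidx' n h1]
    exact largestPow_eq_zero _ _ (by omega)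

/-- The case `p = 13`, for an arbitrary coefficient field containing a square root `v` of `5`.
Here `v ^ 13 = 5 ^ 6 v = -v`, and `1/v ^ 2 = 8 = -5`. -/
lemma case_thirteen [Fact (Nat.Prime 13)] {K : Type} [Field K] [Algebra (ZMod 13) K] [CharP K 13]
    (idx : ℕ → ℕ)
    (hidx : ∀ n, 1 ≤ n → idx n = largestPow ((2 * 13 + 1) / 3) ((13 - 1) * (4 * n - 1) / 6))
    (v : K) (hv : v ^ 2 = 5) (α : LaurentSeries K)
    (hα : -α ^ 4 / 12 - Tval K * α ^ 3 + α ^ 2 + 1 = 0)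
    (a : ℕ → K[X]) (β : ℕ → LaurentSeries K) (hcf : IsCFOf α a β)
    (ε₁ ε₂ : ZMod 13) (lam δ : ℕ → ZMod 13) (hε₁ : ε₁ = 12) (hε₂ : ε₂ = 9)
    (hl1 : lam 1 = 5) (hl2 : lam 2 = 12) (hl3 : lam 3 = 9) (hl4 : lam 4 = 11) (hl5 : lam 5 = 1)
      (hl6 : lam 6 = 5)
    (hδdef : ∀ n, 1 ≤ n → n ≤ 6 →
      δ n = fcf (((List.range n).map fun j =>
        theta (ZMod 13) 4 ^ idx (n - j) * lam (n - j)) ++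
          [2 * (4 : ℕ) * theta (ZMod 13) 4 / ε₂]))
    (hlamrec : ∀ n, 1 ≤ n →
      lam ((2 * 4 + 1) * n + 6 - 2 * 4) = ε₁ ^ ((-1 : ℤ) ^ n) * lam n ∧
      ∀ i, 1 ≤ i → i ≤ 2 * 4 →
        lam ((2 * 4 + 1) * n + 6 - 2 * 4 + i)
          = -vseq (ZMod 13) 4 i * ε₁ ^ ((-1 : ℤ) ^ (n + i)) *
              (2 * (4 : ℕ) * theta (ZMod 13) 4 * δ n) ^ ((-1 : ℤ) ^ i))
    (hδrec : ∀ n, 1 ≤ n →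
      δ ((2 * 4 + 1) * n + 6 - 2 * 4)
        = ε₁ ^ ((-1 : ℤ) ^ n) * δ n * theta (ZMod 13) 4 ∧
      ∀ i, 1 ≤ i → i ≤ 2 * 4 →
        δ ((2 * 4 + 1) * n + 6 - 2 * 4 + i)
          = ε₁ ^ ((-1 : ℤ) ^ (n + i)) *
              ((i : ZMod 13) * vseq (ZMod 13) 4 i / (2 * ((4 : ℕ) : ZMod 13) - 2 * i + 1)) *
              (2 * (4 : ℕ) * theta (ZMod 13) 4 * δ n) ^ ((-1 : ℤ) ^ i)) :
    ∀ n, 1 ≤ n → lam n ≠ 0 ∧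
      a n = C (algebraMap (ZMod 13) K (lam n) * v ^ ((-1 : ℤ) ^ n)) *
        ((Aseq (ZMod 13) 13 4 (idx n)).map (algebraMap (ZMod 13) K)).comp (C v⁻¹ * X) := by
  obtain ⟨hi1, hi0, hil⟩ := idx_thirteen idx hidx
  obtain ⟨w1, w2, w3, w4, w5, w6, w7, w8⟩ := vseq_thirteen
  have hθ := theta_thirteen
  have hκθ : (2 * (4 : ℕ) * theta (ZMod 13) 4 : ZMod 13) = 3 := by
    rw [hθ]
    rfl
  have ρ1 := rho_val (F := ZMod 13) 4 1 7 1 2 w1 rfl rfl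
  have ρ2 := rho_val (F := ZMod 13) 4 2 10 4 8 w2 rfl rfl
  have ρ3 := rho_val (F := ZMod 13) 4 3 5 5 9 w3 rfl rfl
  have ρ4 := rho_val (F := ZMod 13) 4 4 12 9 1 w4 rfl rfl
  have ρ5 := rho_val (F := ZMod 13) 4 5 9 7 12 w5 rfl rfl
  have ρ6 := rho_val (F := ZMod 13) 4 6 11 4 4 w6 rfl rfl
  have ρ7 := rho_val (F := ZMod 13) 4 7 1 9 5 w7 rfl rfl
  have ρ8 := rho_val (F := ZMod 13) 4 8 5 11 11 w8 rfl rfl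
  have hpL : (13 : LaurentSeries K) = 0 := thirteen_eq_laurent
  have hpF : (13 : ZMod 13) = 0 := thirteen_eq
  have hpX : (13 : (ZMod 13)[X]) = 0 := thirteen_eq_poly
  have hevq : ∀ Z : LaurentSeries K, evZ Z (2 * X ^ 7 + 2 * X ^ 5 + X ^ 3 - X : (ZMod 13)[X]) =
      2 * Z ^ 7 + 2 * Z ^ 5 + Z ^ 3 - Z := by
    intro Z
    simp only [map_add, map_sub, map_mul, map_pow, evZ_X, map_ofNat]
  have hpK : (13 : K) = 0 := thirteen_eq
  have hv0 : v ≠ 0 := by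
    rintro rfl
    have h1 : (1 : K) = 0 := by linear_combination 5 * hv + 2 * hpK
    exact one_ne_zero h1
  have hvp : v ^ 13 = -1 * v := by
    have : v ^ 13 = (v ^ 2) ^ 6 * v := by ring
    rw [this, hv]
    linear_combination 1202 * v * hpK
  have hv2 : v⁻¹ * v⁻¹ = -5 := by
    rw [← mul_inv, ← sq, hv]
    exact inv_eq_of_mul_eq_one_right (by linear_combination (-2) * hpK)
  have hq : α ^ 4 - Tval K * α ^ 3 + α ^ 2 + 1 = 0 := by
    have h12 : (12 : LaurentSeries K)⁻¹ = -1 :=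
      inv_eq_of_mul_eq_one_right (by linear_combination (-1) * hpL)
    rw [div_eq_mul_inv, h12] at hα
    linear_combination hα
  have hu : (HahnSeries.C v⁻¹ : LaurentSeries K) ^ 2 = -5 := by
    rw [← map_pow, sq, hv2, map_neg, map_ofNat]
  have hodd : ∀ n : K, (HahnSeries.C (n * v⁻¹) : LaurentSeries K) * (HahnSeries.C v⁻¹ * Tval K)
      = HahnSeries.C n * (-5 * Tval K) := by
    intro n
    rw [map_mul]
    linear_combination HahnSeries.C n * Tval K * hu
  have heven : ∀ n : K, (HahnSeries.C (n * v) : LaurentSeries K) * (HahnSeries.C v⁻¹ * Tval K)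
      = HahnSeries.C n * Tval K := by
    intro n
    rw [← mul_assoc, ← map_mul, mul_assoc, mul_inv_cancel₀ hv0, mul_one]
  have z1 : (-1 : ℤ) ^ 1 = -1 := rfl
  have z2 : (-1 : ℤ) ^ 2 = 1 := rfl
  have z3 : (-1 : ℤ) ^ 3 = -1 := rfl
  have z4 : (-1 : ℤ) ^ 4 = 1 := rfl
  have z5 : (-1 : ℤ) ^ 5 = -1 := rfl
  have z6 : (-1 : ℤ) ^ 6 = 1 := rfl
  have z7 : (-1 : ℤ) ^ (6 + 1) = -1 := rfl
  refine reduction 4 6 (by norm_num) (by norm_num) (by norm_num) idx hi1 hi0 hil v (-1) hv0 hvp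
    (by norm_num) a α β hcf ε₁ ε₂
    (ne_zero_of_inv _ _ 12 hε₁ rfl) (ne_zero_of_inv _ _ 3 hε₂ rfl)
    (ne_zero_of_inv _ _ 7 hθ rfl)
    (left_ne_zero_of_mul_eq_one (b := (5 : ZMod 13)) rfl) lam δ
    ?_ _ rfl ?_ ?_ ?_ ?_ hδdef hlamrec hδrec
    (fun n => [9, 8, 4, 6, 9, 4, 2].getD n 0) ?_ ?_ ?_ (X ^ 5 + 4 * X ^ 3 - 3 * X) (X ^ 3 + 5 * X)
      (2 * X ^ 7 + 2 * X ^ 5 + X ^ 3 - X) ?_ ?_ ?_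
    _ rfl ?_ (fun i => [0, Tval K, -Tval K, -6 * Tval K, -2 * Tval K, -5 * Tval K, 5 * Tval
      K].getD i 0) ?_ (1) (4 * v⁻¹) ?_ ?_ ?_
  · intro i h1 h2
    interval_cases i
    · exact ne_zero_of_inv _ _ 2 w1 rfl
    · exact ne_zero_of_inv _ _ 4 w2 rfl
    · exact ne_zero_of_inv _ _ 8 w3 rfl
    · exact ne_zero_of_inv _ _ 12 w4 rfl
    · exact ne_zero_of_inv _ _ 3 w5 rfl
    · exact ne_zero_of_inv _ _ 6 w6 rfl
    · exact ne_zero_of_inv _ _ 1 w7 rfl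
    · exact ne_zero_of_inv _ _ 8 w8 rfl
  · intro i h1 h2
    interval_cases i
    · exact ne_zero_of_inv _ _ 1 ρ1 rfl
    · exact ne_zero_of_inv _ _ 10 ρ2 rfl
    · exact ne_zero_of_inv _ _ 8 ρ3 rfl
    · exact ne_zero_of_inv _ _ 3 ρ4 rfl
    · exact ne_zero_of_inv _ _ 2 ρ5 rfl
    · exact ne_zero_of_inv _ _ 10 ρ6 rfl
    · exact ne_zero_of_inv _ _ 3 ρ7 rfl
    · exact ne_zero_of_inv _ _ 6 ρ8 rfl
  · rw [w1]
    refine ρ1.trans ?_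
    push_cast
    linear_combination (0) * hpF
  · intro i h1 h2
    interval_cases i
    · refine ρ2.trans ?_
      rw [w2]
      exact eq_add_inv _ _ 1 _ 1 ρ1 rfl
        (by linear_combination (1) * hpF)
    · refine ρ3.trans ?_
      rw [w3]
      exact eq_add_inv _ _ 4 _ 10 ρ2 rfl
        (by linear_combination (0) * hpF)
    · refine ρ4.trans ?_
      rw [w4]
      exact eq_add_inv _ _ 5 _ 8 ρ3 rfl
        (by linear_combination (1) * hpF)
    · refine ρ5.trans ?_
      rw [w5]
      exact eq_add_inv _ _ 9 _ 3 ρ4 rfl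
        (by linear_combination (1) * hpF)
    · refine ρ6.trans ?_
      rw [w6]
      exact eq_add_inv _ _ 7 _ 2 ρ5 rfl
        (by linear_combination (1) * hpF)
    · refine ρ7.trans ?_
      rw [w7]
      exact eq_add_inv _ _ 4 _ 10 ρ6 rfl
        (by linear_combination (0) * hpF)
    · refine ρ8.trans ?_
      rw [w8]
      exact eq_add_inv _ _ 9 _ 3 ρ7 rfl
        (by linear_combination (1) * hpF)
  · rw [hκθ, hθ]
    exact (congrArg (fun z => z * 3 * 2) ρ8).trans rfl
  · rw [hκθ, hε₂, div_eq_mul_inv, inv_eq_of_mul_eq_one_right (b := (3 : ZMod 13)) rfl]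
    rfl
  · intro n hn
    interval_cases n
    · exact ⟨ne_zero_of_inv _ _ 8 hl1 rfl, ne_zero_of_inv _ 8 5 rfl rfl,
        eq_add_inv _ _ 9 _ 3 rfl rfl (by rw [hl1]; rfl)⟩
    · exact ⟨ne_zero_of_inv _ _ 12 hl2 rfl, ne_zero_of_inv _ 4 10 rfl rfl,
        eq_add_inv _ _ 8 _ 5 rfl rfl (by rw [hl2]; rfl)⟩
    · exact ⟨ne_zero_of_inv _ _ 3 hl3 rfl, ne_zero_of_inv _ 6 11 rfl rfl,
        eq_add_inv _ _ 4 _ 10 rfl rfl (by rw [hl3]; rfl)⟩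
    · exact ⟨ne_zero_of_inv _ _ 6 hl4 rfl, ne_zero_of_inv _ 9 3 rfl rfl,
        eq_add_inv _ _ 6 _ 11 rfl rfl (by rw [hl4]; rfl)⟩
    · exact ⟨ne_zero_of_inv _ _ 1 hl5 rfl, ne_zero_of_inv _ 4 10 rfl rfl,
        eq_add_inv _ _ 9 _ 3 rfl rfl (by rw [hl5]; rfl)⟩
    · exact ⟨ne_zero_of_inv _ _ 8 hl6 rfl, ne_zero_of_inv _ 2 7 rfl rfl,
        eq_add_inv _ _ 4 _ 10 rfl rfl (by rw [hl6]; rfl)⟩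
  · rw [hε₁, hε₂, div_eq_mul_inv, inv_eq_of_mul_eq_one_right (b := (3 : ZMod 13)) rfl]
    rfl
  · have e : (C (-(2 * (4 : ℕ) * theta (ZMod 13) 4)) : (ZMod 13)[X]) = 10 := by
      rw [hκθ]
      exact congrArg C (show (-3 : ZMod 13) = 10 from rfl)
    rw [e, Pk]
    linear_combination (X ^ 9 - 4 * X ^ 7 + X ^ 5 - 2 * X ^ 3 + X) * hpX
  · rw [hθ]
    have e : (C (2 : ZMod 13) : (ZMod 13)[X]) = 2 := rfl
    rw [e]
    ring
  · exact lt_of_le_of_lt (b := ((7 : ℕ) : WithBot ℕ)) (by compute_degree!) (by norm_cast)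
  · intro hP Y
    rw [hevq]
    refine core_thirteen hpL _ hP
      (fun i => HahnSeries.C (algebraMap (ZMod 13) K (vseq (ZMod 13) 4 i)))
      ?_ ?_ ?_ ?_ ?_ ?_ ?_ ?_ _ ?_ Y
    · simp only [w1, map_ofNat]
    · simp only [w2, map_ofNat]
    · simp only [w3, map_ofNat]
    · simp only [w4, map_ofNat]
    · simp only [w5, map_ofNat]
    · simp only [w6, map_ofNat]
    · simp only [w7, map_one]
    · simp only [w8, map_ofNat]
    · rw [hκθ, map_ofNat, map_pow, map_ofNat]
      linear_combination 0 * hpL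
  · intro i h1 h2
    interval_cases i
    · rw [hl1, z1, zpow_neg_one, hodd]
      simp only [List.getD_cons_zero, List.getD_cons_succ, map_ofNat]
      linear_combination (2) * Tval K * hpL
    · rw [hl2, z2, zpow_one, heven]
      simp only [List.getD_cons_zero, List.getD_cons_succ, map_ofNat]
      linear_combination (-1) * Tval K * hpL
    · rw [hl3, z3, zpow_neg_one, hodd]
      simp only [List.getD_cons_zero, List.getD_cons_succ, map_ofNat]
      linear_combination (3) * Tval K * hpL
    · rw [hl4, z4, zpow_one, heven]
      simp only [List.getD_cons_zero, List.getD_cons_succ, map_ofNat]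
      linear_combination (-1) * Tval K * hpL
    · rw [hl5, z5, zpow_neg_one, hodd]
      simp only [List.getD_cons_zero, List.getD_cons_succ, map_one]
      ring
    · rw [hl6, z6, zpow_one, heven]
      simp only [List.getD_cons_zero, List.getD_cons_succ, map_ofNat]
  · rw [hε₁, z7, zpow_neg_one, inv_inv, map_ofNat]
    have h1 : v⁻¹ * v = 1 := inv_mul_cancel₀ hv0
    linear_combination 12 * h1 + hpK
  · rw [hε₂, map_ofNat]
    linear_combination v⁻¹ * hpK
  · intro γ hγ
    have hP : ((HahnSeries.C v⁻¹ * Tval K) ^ 2 - 1 : LaurentSeries K) = -5 * Tval K ^ 2 - 1 := by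
      linear_combination Tval K ^ 2 * hu
    rw [hP, hevq, map_one, one_mul, map_mul, map_ofNat] at hγ
    rw [hP, map_one, one_mul]
    refine start_thirteen hpL α (Tval K) γ hq (hγ.trans ?_)
    congr 1
    calc _ = 4 * (2 * ((HahnSeries.C v⁻¹ : LaurentSeries K) ^ 2) ^ 4 * Tval K ^ 7
          + 2 * ((HahnSeries.C v⁻¹ : LaurentSeries K) ^ 2) ^ 3 * Tval K ^ 5
          + ((HahnSeries.C v⁻¹ : LaurentSeries K) ^ 2) ^ 2 * Tval K ^ 3
          - (HahnSeries.C v⁻¹ : LaurentSeries K) ^ 2 * Tval K) := by ring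
      _ = _ := by
        rw [hu]
        ring

/-- **Corollary 2.** Let `p ∈ {7, 13}`, `(l, k) = ((p−1)/2, (p−1)/3)`,
`i(n) = v_{(2p+1)/3}((p−1)(4n−1)/6)`, and let `α` be the root of
`−x⁴/12 − Tx³ + x² + 1 = 0` with `|α| > 1`, `v = 1` if `p = 7` and `v = √5 ∈ F₁₆₉` if
`p = 13`. Then `a_n = λ_n v^{(−1)^n} A_{i(n),k}(T/v)` for all `n ≥ 1`, where `(λ_n)` is
defined from `(ε₁, ε₂, λ₁, …, λ_l) = (3,5,2,6,6)` (`p = 7`) resp.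
`(12,9,5,12,9,11,1,5)` (`p = 13`) by the recursions of Theorem 1. -/
theorem stmt14 (p : ℕ) [Fact p.Prime] (hp : p = 7 ∨ p = 13)
    (l k : ℕ) (hl : l = (p - 1) / 2) (hkk : k = (p - 1) / 3)
    (idx : ℕ → ℕ)
    (hidx : ∀ n, 1 ≤ n → idx n = largestPow ((2 * p + 1) / 3) ((p - 1) * (4 * n - 1) / 6))
    (v : GaloisField p 2) (hv7 : p = 7 → v = 1) (hv13 : p = 13 → v ^ 2 = 5)
    (α : LaurentSeries (GaloisField p 2)) (hdeg : 0 < adeg α)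
    (hα : -α ^ 4 / 12 - Tval (GaloisField p 2) * α ^ 3 + α ^ 2 + 1 = 0)
    (a : ℕ → Polynomial (GaloisField p 2)) (β : ℕ → LaurentSeries (GaloisField p 2))
    (hcf : IsCFOf α a β)
    (ε₁ ε₂ : ZMod p) (lam δ : ℕ → ZMod p)
    (hinit7 : p = 7 → ε₁ = 3 ∧ ε₂ = 5 ∧ lam 1 = 2 ∧ lam 2 = 6 ∧ lam 3 = 6)
    (hinit13 : p = 13 → ε₁ = 12 ∧ ε₂ = 9 ∧ lam 1 = 5 ∧ lam 2 = 12 ∧ lam 3 = 9 ∧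
      lam 4 = 11 ∧ lam 5 = 1 ∧ lam 6 = 5)
    -- `δ_n = [θ_k^{i(n)}λ_n, …, θ_k^{i(1)}λ₁, 2kθ_k/ε₂]` for `n ≤ l`
    (hδdef : ∀ n, 1 ≤ n → n ≤ l →
      δ n = fcf (((List.range n).map fun j => theta (ZMod p) k ^ idx (n - j) * lam (n - j)) ++
        [2 * k * theta (ZMod p) k / ε₂]))
    -- the recursions of Theorem 1, with `f(n) = (2k+1)n + l − 2k`
    (hlamrec : ∀ n, 1 ≤ n →
      lam ((2 * k + 1) * n + l - 2 * k) = ε₁ ^ ((-1 : ℤ) ^ n) * lam n ∧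
      ∀ i, 1 ≤ i → i ≤ 2 * k →
        lam ((2 * k + 1) * n + l - 2 * k + i)
          = -vseq (ZMod p) k i * ε₁ ^ ((-1 : ℤ) ^ (n + i)) *
              (2 * k * theta (ZMod p) k * δ n) ^ ((-1 : ℤ) ^ i))
    (hδrec : ∀ n, 1 ≤ n →
      δ ((2 * k + 1) * n + l - 2 * k) = ε₁ ^ ((-1 : ℤ) ^ n) * δ n * theta (ZMod p) k ∧
      ∀ i, 1 ≤ i → i ≤ 2 * k →
        δ ((2 * k + 1) * n + l - 2 * k + i)
          = ε₁ ^ ((-1 : ℤ) ^ (n + i)) *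
              ((i : ZMod p) * vseq (ZMod p) k i / (2 * (k : ZMod p) - 2 * i + 1)) *
              (2 * k * theta (ZMod p) k * δ n) ^ ((-1 : ℤ) ^ i)) :
    ∀ n, 1 ≤ n → lam n ≠ 0 ∧
      a n = Polynomial.C (algebraMap (ZMod p) (GaloisField p 2) (lam n) * v ^ ((-1 : ℤ) ^ n)) *
        ((Aseq (ZMod p) p k (idx n)).map (algebraMap (ZMod p) (GaloisField p 2))).comp
          (Polynomial.C v⁻¹ * Polynomial.X) := by
  rcases hp with rfl | rfl
  · obtain rfl : l = 3 := by omega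
    obtain rfl : k = 2 := by omega
    obtain ⟨e1, e2, l1, l2, l3⟩ := hinit7 rfl
    exact case_seven idx hidx v (hv7 rfl) α hα a β hcf ε₁ ε₂ lam δ e1 e2 l1 l2 l3 hδdef hlamrec
      hδrec
  · obtain rfl : l = 6 := by omega
    obtain rfl : k = 4 := by omega
    obtain ⟨e1, e2, l1, l2, l3, l4, l5, l6⟩ := hinit13 rfl
    exact case_thirteen idx hidx v (hv13 rfl) α hα a β hcf ε₁ ε₂ lam δ e1 e2 l1 l2 l3 l4 l5 l6
      hδdef hlamrec hδrec
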